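/- arXiv:2409.08802 — 11 statements merged into one kernel-verified Lean document; each statement's English description precedes it below -/
import Mathlib

section
/- Let A, B be symmetric n×n real matrices. Suppose there are vectors u^{(ij)}, v^{(kl)} ∈ ℝⁿ for all i,j,k,l ∈ [n] satisfying: (1) u^{(ij)}_k + u^{(ij)}_l + v^{(kl)}_i + v^{(kl)}_j ≤ A_{ij}B_{kl} whenever (i ≠ j and k ≠ l) or (i = j and k = l); (2) u^{(ij)}_i + u^{(ij)}_j + v^{(ij)}_i + v^{(ij)}_j = A_{ij}B_{ij} for all i,j; (3) for every permutation σ of [n], Σ_{i,j} (u^{(ij)}_{σ(i)} + u^{(ij)}_{σ(j)} + v^{(ij)}_{σ⁻¹(i)} + v^{(ij)}_{σ⁻¹(j)}) ≥ Σ_{i,j} A_{ij}B_{ij}. Then (I, vec(I)vec(I)ᵀ) is an optimal solution to the SDP relaxation: it is feasible, and every feasible pair (X, 𝐗) satisfies ⟨A⊗B, 𝐗⟩ ≥ Σ_{i,j} A_{ij}B_{ij} = ⟨A⊗B, vec(I)vec(I)ᵀ⟩. -/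
open Matrix BigOperators

noncomputable section

/-- `vec(X)` indexed by pairs `(i,k)` with `vec(X)_(i,k) = X i k`. -/
def vecM {n : ℕ} (X : Matrix (Fin n) (Fin n) ℝ) : Fin n × Fin n → ℝ :=
  fun p => X p.1 p.2

/-- Kronecker product indexed so that `(A ⊗ B) (i,k) (j,l) = A i j * B k l`. -/
def kron {n : ℕ} (A B : Matrix (Fin n) (Fin n) ℝ) :
    Matrix (Fin n × Fin n) (Fin n × Fin n) ℝ :=
  Matrix.of fun p q => A p.1 q.1 * B p.2 q.2

/-- The all-ones `n × n` matrix. -/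
def Eall (n : ℕ) : Matrix (Fin n) (Fin n) ℝ :=
  Matrix.of fun _ _ => (1 : ℝ)

/-- `X` is doubly stochastic. -/
def DS {n : ℕ} (X : Matrix (Fin n) (Fin n) ℝ) : Prop :=
  (∀ i, ∑ j, X i j = 1) ∧ (∀ j, ∑ i, X i j = 1) ∧ (∀ i j, 0 ≤ X i j)

/-- Feasibility of the pair `(X, Y)` for the SDP relaxation of the QAP. -/
def SDPFeasible {n : ℕ} (X : Matrix (Fin n) (Fin n) ℝ)
    (Y : Matrix (Fin n × Fin n) (Fin n × Fin n) ℝ) : Prop :=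
  (Y - vecMulVec (vecM X) (vecM X)).PosSemidef ∧
  (∀ k l, ∑ i, ∑ j, Y (i, k) (j, l) = 1) ∧
  (∀ k l, ∑ i, ∑ j, Y (k, i) (l, j) = 1) ∧
  (∀ k i j, i ≠ j → Y (i, k) (j, k) = 0) ∧
  (∀ k i j, i ≠ j → Y (k, i) (k, j) = 0) ∧
  (∀ p q, 0 ≤ Y p q) ∧
  DS X

/-- The SDP objective `⟨A ⊗ B, Y⟩`. -/
def sdpObj {n : ℕ} (A B : Matrix (Fin n) (Fin n) ℝ)
    (Y : Matrix (Fin n × Fin n) (Fin n × Fin n) ℝ) : ℝ :=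
  ∑ p, ∑ q, kron A B p q * Y p q

/-- The set `𝒮`: closure of matrices `Y` such that `G⊗E + E⊗H + Y` is PSD for some `G, H`. -/
def Scone (n : ℕ) : Set (Matrix (Fin n × Fin n) (Fin n × Fin n) ℝ) :=
  closure {Y | ∃ G H : Matrix (Fin n) (Fin n) ℝ,
    (kron G (Eall n) + kron (Eall n) H + Y).PosSemidef}

/-- The set `𝒯`. -/
def Tcone (n : ℕ) : Set (Matrix (Fin n × Fin n) (Fin n × Fin n) ℝ) :=
  {Y | ∀ X : Matrix (Fin n) (Fin n) ℝ, DS X →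
    ∑ p, ∑ q, vecM X p * Y p q * vecM X q ≥
      ∑ p, ∑ q, vecM (1 : Matrix (Fin n) (Fin n) ℝ) p * Y p q *
        vecM (1 : Matrix (Fin n) (Fin n) ℝ) q}

lemma aux_marg {ι : Type*} [Fintype ι] (Y : Matrix ι ι ℝ) (x w : ι → ℝ)
    (h : (Y - vecMulVec x x).PosSemidef) (hx : x ⬝ᵥ w = 1) (hY : w ⬝ᵥ (Y *ᵥ w) = 1) :
    Y *ᵥ w = x := by
  have e : (Y - vecMulVec x x) *ᵥ w = Y *ᵥ w - x := by
    rw [sub_mulVec, vecMulVec_mulVec, hx]; simp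
  have h0 := (h.dotProduct_mulVec_zero_iff w).1 (by
    rw [e, dotProduct_sub]
    simp only [star_trivial]
    rw [hY, dotProduct_comm w x, hx, sub_self])
  rw [e] at h0
  exact sub_eq_zero.1 h0

lemma marg_facts {n : ℕ} {X : Matrix (Fin n) (Fin n) ℝ}
    {Y : Matrix (Fin n × Fin n) (Fin n × Fin n) ℝ} (h : SDPFeasible X Y) :
    (∀ i k l, ∑ j, Y (i, k) (j, l) = X i k) ∧ (∀ i k j, ∑ l, Y (i, k) (j, l) = X i k) := by
  obtain ⟨hp, hc, hr, -, -, -, ds1, ds2, -⟩ := h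
  constructor
  · intro i k l
    have := aux_marg Y (vecM X) (fun p => if p.2 = l then 1 else 0) hp
      (by simp [dotProduct, vecM, Fintype.sum_prod_type, ds2])
      (by
        have := hc l l
        simpa [dotProduct, mulVec, Fintype.sum_prod_type] using this)
    have := congrFun this (i, k)
    simpa [dotProduct, mulVec, Fintype.sum_prod_type, vecM] using this
  · intro i k l
    have := aux_marg Y (vecM X) (fun p => if p.1 = l then 1 else 0) hp
      (by simp [dotProduct, vecM, Fintype.sum_prod_type_right, ds1])
      (by
        have := hr l l
        simpa [dotProduct, mulVec, Fintype.sum_prod_type_right] using this)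
    have := congrFun this (i, k)
    simpa [dotProduct, mulVec, Fintype.sum_prod_type_right, vecM] using this

lemma Y_symm {n : ℕ} {X : Matrix (Fin n) (Fin n) ℝ}
    {Y : Matrix (Fin n × Fin n) (Fin n × Fin n) ℝ} (h : SDPFeasible X Y) (p q) :
    Y p q = Y q p := by
  have := h.1.1.apply p q
  simp [vecMulVec_apply, mul_comm] at this
  linarith

lemma birk {n : ℕ} (C X : Matrix (Fin n) (Fin n) ℝ) (hX : DS X) (c : ℝ)
    (h : ∀ σ : Equiv.Perm (Fin n), c ≤ ∑ i, C i (σ i)) :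
    c ≤ ∑ i, ∑ k, C i k * X i k := by
  obtain ⟨w, hw, hw1, rfl⟩ := exists_eq_sum_perm_of_mem_doublyStochastic
    (mem_doublyStochastic_iff_sum.2 ⟨hX.2.2, hX.1, hX.2.1⟩)
  have e : ∀ σ : Equiv.Perm (Fin n), ∑ i, ∑ k, C i k * σ.permMatrix ℝ i k = ∑ i, C i (σ i) := by
    intro σ
    refine Finset.sum_congr rfl fun i _ => ?_
    simp [PEquiv.toMatrix_apply, Equiv.toPEquiv_apply]
  have e2 : ∑ i, ∑ k, C i k * (∑ σ, w σ • σ.permMatrix ℝ) i k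
      = ∑ σ : Equiv.Perm (Fin n), w σ * ∑ i, C i (σ i) := by
    simp_rw [← e, Matrix.sum_apply, Finset.mul_sum]
    rw [Finset.sum_comm' (t' := Finset.univ) (s' := fun _ => Finset.univ) (by simp)]
    simp_rw [Matrix.smul_apply, smul_eq_mul]
    rw [Finset.sum_comm]
    conv_lhs => enter [2, i]; rw [Finset.sum_comm]
    rw [Finset.sum_comm]
    refine Finset.sum_congr rfl fun σ _ => Finset.sum_congr rfl fun i _ =>
      Finset.sum_congr rfl fun k _ => by ring
  rw [e2]
  calc c = ∑ σ, w σ * c := by rw [← Finset.sum_mul, hw1, one_mul]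
    _ ≤ _ := Finset.sum_le_sum fun σ _ => mul_le_mul_of_nonneg_left (h σ) (hw σ)

lemma swap4 {n : ℕ} (f : Fin n → Fin n → Fin n → Fin n → ℝ) :
    ∑ i, ∑ k, ∑ j, ∑ l, f i k j l = ∑ j, ∑ l, ∑ i, ∑ k, f i k j l := by
  have := Finset.sum_comm (s := (Finset.univ : Finset (Fin n × Fin n)))
    (t := (Finset.univ : Finset (Fin n × Fin n))) (f := fun p q => f p.1 p.2 q.1 q.2)
  simpa only [Fintype.sum_prod_type] using this

lemma lower {n : ℕ} (u v : Fin n → Fin n → (Fin n → ℝ)) {X : Matrix (Fin n) (Fin n) ℝ}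
    {Y : Matrix (Fin n × Fin n) (Fin n × Fin n) ℝ} (h : SDPFeasible X Y) :
    ∑ i, ∑ k, ∑ j, ∑ l, (u i j k + u i j l + v k l i + v k l j) * Y (i, k) (j, l)
      = ∑ i, ∑ k, (∑ j, (u i j k + u j i k + v k j i + v j k i)) * X i k := by
  obtain ⟨m1, m2⟩ := marg_facts h
  have s1 : ∑ i, ∑ k, ∑ j, ∑ l, u i j k * Y (i, k) (j, l) = ∑ i, ∑ k, ∑ j, u i j k * X i k := by
    simp_rw [← Finset.mul_sum, m2]
  have s2 : ∑ i, ∑ k, ∑ j, ∑ l, u i j l * Y (i, k) (j, l) = ∑ i, ∑ k, ∑ j, u j i k * X i k := by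
    rw [swap4]
    simp_rw [Y_symm h, ← Finset.mul_sum]
    refine Finset.sum_congr rfl fun j _ => Finset.sum_congr rfl fun l _ =>
      Finset.sum_congr rfl fun i _ => ?_
    rw [← m2 j l i]
  have s3 : ∑ i, ∑ k, ∑ j, ∑ l, v k l i * Y (i, k) (j, l) = ∑ i, ∑ k, ∑ j, v k j i * X i k := by
    refine Finset.sum_congr rfl fun i _ => Finset.sum_congr rfl fun k _ => ?_
    rw [Finset.sum_comm]
    simp_rw [← Finset.mul_sum, m1]
  have s4 : ∑ i, ∑ k, ∑ j, ∑ l, v k l j * Y (i, k) (j, l) = ∑ i, ∑ k, ∑ j, v j k i * X i k := by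
    rw [swap4]
    refine Finset.sum_congr rfl fun i _ => Finset.sum_congr rfl fun k _ => ?_
    rw [Finset.sum_comm]
    refine Finset.sum_congr rfl fun j _ => ?_
    rw [← m1 i k j, ← Finset.mul_sum]
    simp_rw [Y_symm h (i, k)]
  simp_rw [add_mul, Finset.sum_add_distrib, s1, s2, s3, s4, add_mul, Finset.sum_mul,
    Finset.sum_add_distrib]

lemma obj_expand {n : ℕ} (A B : Matrix (Fin n) (Fin n) ℝ)
    (Y : Matrix (Fin n × Fin n) (Fin n × Fin n) ℝ) :
    sdpObj A B Y = ∑ i, ∑ k, ∑ j, ∑ l, A i j * B k l * Y (i, k) (j, l) := by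
  simp [sdpObj, kron, Fintype.sum_prod_type]

/-- Theorem 1 (master exactness theorem): under the three linear-inequality conditions on
the certificate vectors `u, v`, the pair `(I, vec(I)vec(I)ᵀ)` is optimal for the SDP
relaxation of the QAP. -/
theorem stmt0 {n : ℕ} (A B : Matrix (Fin n) (Fin n) ℝ)
    (hA : A.IsSymm) (hB : B.IsSymm)
    (u v : Fin n → Fin n → (Fin n → ℝ))
    (h1 : ∀ i j k l, ((i ≠ j ∧ k ≠ l) ∨ (i = j ∧ k = l)) →
      u i j k + u i j l + v k l i + v k l j ≤ A i j * B k l)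
    (h2 : ∀ i j, u i j i + u i j j + v i j i + v i j j = A i j * B i j)
    (h3 : ∀ σ : Equiv.Perm (Fin n),
      (∑ i, ∑ j, (u i j (σ i) + u i j (σ j) + v i j (σ⁻¹ i) + v i j (σ⁻¹ j))) ≥
        ∑ i, ∑ j, A i j * B i j) :
    SDPFeasible (1 : Matrix (Fin n) (Fin n) ℝ)
      (vecMulVec (vecM (1 : Matrix (Fin n) (Fin n) ℝ))
        (vecM (1 : Matrix (Fin n) (Fin n) ℝ))) ∧
    (∀ (X : Matrix (Fin n) (Fin n) ℝ)
        (Y : Matrix (Fin n × Fin n) (Fin n × Fin n) ℝ),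
      SDPFeasible X Y → sdpObj A B Y ≥ ∑ i, ∑ j, A i j * B i j) ∧
    sdpObj A B (vecMulVec (vecM (1 : Matrix (Fin n) (Fin n) ℝ))
        (vecM (1 : Matrix (Fin n) (Fin n) ℝ))) = ∑ i, ∑ j, A i j * B i j := by
  refine ⟨⟨?_, ?_, ?_, ?_, ?_, ?_, ?_, ?_, ?_⟩, ?_, ?_⟩
  · rw [sub_self]; exact PosSemidef.zero
  · intro k l
    simp [vecMulVec_apply, vecM, Matrix.one_apply]
  · intro k l
    simp [vecMulVec_apply, vecM, Matrix.one_apply]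
  · intro k i j hij
    simp only [vecMulVec_apply, vecM, Matrix.one_apply]
    grind
  · intro k i j hij
    simp only [vecMulVec_apply, vecM, Matrix.one_apply]
    grind
  · intro p q
    simp only [vecMulVec_apply, vecM, Matrix.one_apply]
    positivity
  · intro i; simp [Matrix.one_apply]
  · intro i; simp [Matrix.one_apply]
  · intro i j
    simp only [Matrix.one_apply]
    positivity
  · intro X Y h
    rw [ge_iff_le, obj_expand]
    refine le_trans ?_ (le_trans (lower u v h).ge ?_)
    · refine birk (fun i k => ∑ j, (u i j k + u j i k + v k j i + v j k i)) X h.2.2.2.2.2.2 _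
        fun σ => ?_
      refine le_trans (h3 σ) (le_of_eq ?_)
      simp_rw [Finset.sum_add_distrib]
      have e1 : ∑ i, ∑ j, u i j (σ j) = ∑ i, ∑ j, u j i (σ i) := Finset.sum_comm
      have e2 : ∑ i, ∑ j, v i j (σ⁻¹ i) = ∑ i, ∑ j, v (σ i) j i := by
        rw [← Equiv.sum_comp σ]; simp
      have e3 : ∑ i, ∑ j, v i j (σ⁻¹ j) = ∑ i, ∑ j, v j (σ i) i := by
        rw [Finset.sum_comm, ← Equiv.sum_comp σ]; simp
      rw [e1, e2, e3]
    · obtain ⟨-, -, -, z1, z2, nn, -⟩ := h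
      refine Finset.sum_le_sum fun i _ => Finset.sum_le_sum fun k _ =>
        Finset.sum_le_sum fun j _ => Finset.sum_le_sum fun l _ => ?_
      by_cases hc : (i ≠ j ∧ k ≠ l) ∨ (i = j ∧ k = l)
      · exact mul_le_mul_of_nonneg_right (h1 i j k l hc) (nn _ _)
      · have : Y (i, k) (j, l) = 0 := by
          by_cases hij : i = j
          · subst hij
            exact z2 i k l (by tauto)
          · have : k = l := by tauto
            subst this
            exact z1 k i j hij
        simp [this]
  · rw [obj_expand]
    simp [vecMulVec_apply, vecM, Matrix.one_apply]
end
end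

section
/- Let A, B be symmetric 3×3 real matrices. Then the SDP relaxation of the QAP is exact: the infimum of ⟨A⊗B, 𝐗⟩ over feasible pairs (X, 𝐗) equals the QAP value min_{σ ∈ S₃} Σ_{i,j} A_{ij}B_{σ(i)σ(j)}. -/
open Matrix BigOperators

noncomputable section

lemma aux_ker {n : ℕ} {X : Matrix (Fin n) (Fin n) ℝ}
    {Y : Matrix (Fin n × Fin n) (Fin n × Fin n) ℝ}
    (h : (Y - vecMulVec (vecM X) (vecM X)).PosSemidef) (v : Fin n × Fin n → ℝ)
    (hx : vecM X ⬝ᵥ v = 0) (hv : v ⬝ᵥ (Y *ᵥ v) = 0) : Y *ᵥ v = 0 := by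
  have e : (Y - vecMulVec (vecM X) (vecM X)) *ᵥ v = Y *ᵥ v := by
    rw [sub_mulVec, vecMulVec_mulVec, hx]; simp
  have := (h.dotProduct_mulVec_zero_iff v).1 (by rw [e]; simpa using hv)
  rwa [e] at this

lemma aux_symm {n : ℕ} {X : Matrix (Fin n) (Fin n) ℝ}
    {Y : Matrix (Fin n × Fin n) (Fin n × Fin n) ℝ}
    (h : (Y - vecMulVec (vecM X) (vecM X)).PosSemidef) (p q) : Y p q = Y q p := by
  have := h.1.apply p q
  simp [vecMulVec_apply] at this
  linarith [mul_comm (vecM X p) (vecM X q)]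

lemma aux_col {X : Matrix (Fin 3) (Fin 3) ℝ}
    {Y : Matrix (Fin 3 × Fin 3) (Fin 3 × Fin 3) ℝ}
    (h : SDPFeasible X Y) (p : Fin 3 × Fin 3) (k l : Fin 3) :
    ∑ i, Y p (i, k) = ∑ i, Y p (i, l) := by
  obtain ⟨h1, h2, h3, h4, h5, h6, h7, h8, h9⟩ := h
  have key := aux_ker h1 (fun q => (if q.2 = k then 1 else 0) - (if q.2 = l then 1 else 0)) ?_ ?_
  · have := congrFun key p
    simp [mulVec, dotProduct, Fintype.sum_prod_type, mul_sub, Finset.sum_sub_distrib] at this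
    linarith
  · simp [dotProduct, Fintype.sum_prod_type, mul_sub, Finset.sum_sub_distrib, vecM, h8]
  · have a1 := h2 k k
    have a2 := h2 k l
    have a3 := h2 l k
    have a4 := h2 l l
    simp [mulVec, dotProduct, Fintype.sum_prod_type, mul_sub, sub_mul, Finset.sum_sub_distrib,
      a1, a2, a3, a4]

lemma aux_row {X : Matrix (Fin 3) (Fin 3) ℝ}
    {Y : Matrix (Fin 3 × Fin 3) (Fin 3 × Fin 3) ℝ}
    (h : SDPFeasible X Y) (p : Fin 3 × Fin 3) (k l : Fin 3) :
    ∑ i, Y p (k, i) = ∑ i, Y p (l, i) := by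
  obtain ⟨h1, h2, h3, h4, h5, h6, h7, h8, h9⟩ := h
  have key := aux_ker h1 (fun q => (if q.1 = k then 1 else 0) - (if q.1 = l then 1 else 0)) ?_ ?_
  · have := congrFun key p
    simp [mulVec, dotProduct, Fintype.sum_prod_type_right, mul_sub,
      Finset.sum_sub_distrib] at this
    linarith
  · simp [dotProduct, Fintype.sum_prod_type_right, mul_sub, Finset.sum_sub_distrib, vecM, h7]
  · have a1 := h3 k k
    have a2 := h3 k l
    have a3 := h3 l k
    have a4 := h3 l l
    simp [mulVec, dotProduct, Fintype.sum_prod_type_right, mul_sub, sub_mul,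
      Finset.sum_sub_distrib, a1, a2, a3, a4]

lemma sum_three (f : Fin 3 → ℝ) {i j m : Fin 3} (hij : i ≠ j) (him : i ≠ m) (hjm : j ≠ m) :
    ∑ t, f t = f i + f j + f m := by
  rw [Fin.sum_univ_three]
  fin_cases i <;> fin_cases j <;> fin_cases m <;> simp at hij him hjm ⊢ <;> ring

/-- the diagonal entry splits -/
lemma aux_diag {X : Matrix (Fin 3) (Fin 3) ℝ}
    {Y : Matrix (Fin 3 × Fin 3) (Fin 3 × Fin 3) ℝ}
    (h : SDPFeasible X Y) {i j k l n : Fin 3} (hij : i ≠ j)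
    (hkl : k ≠ l) (hkn : k ≠ n) (hln : l ≠ n) :
    Y (i, k) (i, k) = Y (i, k) (j, l) + Y (i, k) (j, n) := by
  have := aux_row h (i, k) i j
  obtain ⟨h1, h2, h3, h4, h5, h6, h7, h8, h9⟩ := h
  rw [sum_three _ hkl hkn hln, sum_three _ hkl hkn hln, h5 i k l hkl, h5 i k n hkn,
    h4 k i j hij] at this
  linarith

lemma aux_diag2 {X : Matrix (Fin 3) (Fin 3) ℝ}
    {Y : Matrix (Fin 3 × Fin 3) (Fin 3 × Fin 3) ℝ}
    (h : SDPFeasible X Y) {i j m k l : Fin 3} (hkl : k ≠ l)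
    (hij : i ≠ j) (him : i ≠ m) (hjm : j ≠ m) :
    Y (i, k) (i, k) = Y (i, k) (j, l) + Y (i, k) (m, l) := by
  have := aux_col h (i, k) k l
  obtain ⟨h1, h2, h3, h4, h5, h6, h7, h8, h9⟩ := h
  rw [sum_three _ hij him hjm, sum_three _ hij him hjm, h4 k i j hij, h4 k i m him,
    h5 i k l hkl] at this
  linarith

lemma aux_T {X : Matrix (Fin 3) (Fin 3) ℝ}
    {Y : Matrix (Fin 3 × Fin 3) (Fin 3 × Fin 3) ℝ}
    (h : SDPFeasible X Y) (σ : Equiv.Perm (Fin 3)) {i j m : Fin 3}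
    (hij : i ≠ j) (him : i ≠ m) (hjm : j ≠ m) :
    Y (i, σ i) (j, σ j) = Y (i, σ i) (m, σ m) := by
  have s1 := σ.injective.ne hij
  have s2 := σ.injective.ne him
  have s3 := σ.injective.ne hjm
  have a := aux_diag h hij s1 s2 s3
  have b := aux_diag2 h s2 hij him hjm
  linarith

lemma aux_W {X : Matrix (Fin 3) (Fin 3) ℝ}
    {Y : Matrix (Fin 3 × Fin 3) (Fin 3 × Fin 3) ℝ}
    (h : SDPFeasible X Y) (σ : Equiv.Perm (Fin 3)) (i j : Fin 3) (hij : i ≠ j) :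
    Y (i, σ i) (j, σ j) = Y (0, σ 0) (1, σ 1) := by
  have t1 := aux_T h σ (i := 0) (j := 1) (m := 2) (by decide) (by decide) (by decide)
  have t2 := aux_T h σ (i := 1) (j := 0) (m := 2) (by decide) (by decide) (by decide)
  have s1 := aux_symm h.1 (0, σ 0) (1, σ 1)
  have s2 := aux_symm h.1 (0, σ 0) (2, σ 2)
  have s3 := aux_symm h.1 (1, σ 1) (2, σ 2)
  fin_cases i <;> fin_cases j <;> simp at hij ⊢ <;> linarith

/-- the six permutations -/
def P6 : Fin 6 → Equiv.Perm (Fin 3) :=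
  ![1, Equiv.swap 0 1, Equiv.swap 0 2, Equiv.swap 1 2, finRotate 3, (finRotate 3)⁻¹]

lemma P6_off (i j k l : Fin 3) (hij : i ≠ j) (hkl : k ≠ l) :
    ∃ t, P6 t i = k ∧ P6 t j = l ∧ ∀ s, P6 s i = k ∧ P6 s j = l → s = t := by
  revert i j k l; decide

lemma P6_diag (i k : Fin 3) : ∃ j l n s t, i ≠ j ∧ k ≠ l ∧ k ≠ n ∧ l ≠ n ∧ s ≠ t ∧
    P6 s i = k ∧ P6 t i = k ∧ P6 s j = l ∧ P6 t j = n ∧ ∀ u, P6 u i = k → u = s ∨ u = t := by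
  revert i k; decide

lemma aux_decomp {X : Matrix (Fin 3) (Fin 3) ℝ}
    {Y : Matrix (Fin 3 × Fin 3) (Fin 3 × Fin 3) ℝ}
    (h : SDPFeasible X Y) (i k j l : Fin 3) :
    Y (i, k) (j, l) = ∑ t, if P6 t i = k ∧ P6 t j = l
      then Y (0, P6 t 0) (1, P6 t 1) else 0 := by
  by_cases hij : i = j
  · subst hij
    by_cases hkl : k = l
    · subst hkl
      obtain ⟨j, l, n, s, t, hij, hkl, hkn, hln, hst, a, b, c, d, e⟩ := P6_diag i k
      rw [aux_diag h hij hkl hkn hln, Finset.sum_eq_add s t hst]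
      · have e1 := aux_W h (P6 s) i j hij
        have e2 := aux_W h (P6 t) i j hij
        rw [a, c] at e1
        rw [b, d] at e2
        rw [if_pos ⟨a, a⟩, if_pos ⟨b, b⟩, e1, e2]
      · rintro u - ⟨h1, h2⟩
        rw [if_neg]
        rintro ⟨h3, -⟩
        rcases e u h3 with h | h <;> contradiction
      · simp
      · simp
    · rw [h.2.2.2.2.1 i k l hkl]
      symm
      apply Finset.sum_eq_zero
      intro t _
      rw [if_neg]
      rintro ⟨h3, h4⟩
      exact hkl (h3.symm.trans h4)
  · by_cases hkl : k = l
    · subst hkl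
      rw [h.2.2.2.1 k i j hij]
      symm
      apply Finset.sum_eq_zero
      intro t _
      rw [if_neg]
      rintro ⟨h3, h4⟩
      exact hij ((P6 t).injective (h3.trans h4.symm))
    · obtain ⟨t, a, b, c⟩ := P6_off i j k l hij hkl
      rw [Finset.sum_eq_single t]
      · have e1 := aux_W h (P6 t) i j hij
        rw [a, b] at e1
        rw [if_pos ⟨a, b⟩, e1]
      · intro u _ hu
        rw [if_neg]
        exact fun h => hu (c u h)
      · simp

lemma aux_obj (A B : Matrix (Fin 3) (Fin 3) ℝ) (w : Fin 6 → ℝ)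
    {Y : Matrix (Fin 3 × Fin 3) (Fin 3 × Fin 3) ℝ}
    (hY : ∀ i k j l, Y (i, k) (j, l) = ∑ t, if P6 t i = k ∧ P6 t j = l then w t else 0) :
    sdpObj A B Y = ∑ t, w t * ∑ i, ∑ j, A i j * B (P6 t i) (P6 t j) := by
  have : ∀ t, w t * ∑ i, ∑ j, A i j * B (P6 t i) (P6 t j) =
      ∑ i, ∑ k, ∑ j, ∑ l, A i j * B k l * (if P6 t i = k ∧ P6 t j = l then w t else 0) := by
    intro t
    rw [Finset.mul_sum]
    refine Finset.sum_congr rfl fun i _ => ?_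
    rw [Finset.sum_comm, Finset.mul_sum]
    refine Finset.sum_congr rfl fun j _ => ?_
    simp [ite_and]
    ring
  simp_rw [this]
  unfold sdpObj kron
  simp only [Fintype.sum_prod_type, hY, Finset.mul_sum, Matrix.of_apply]
  simp_rw [Finset.sum_comm (γ := Fin 6)]

lemma aux_sum (w : Fin 6 → ℝ) :
    ∑ k, ∑ l, ∑ t, (if P6 t 0 = k ∧ P6 t 1 = l then w t else 0) = ∑ t, w t := by
  have : ∀ t, w t = ∑ k, ∑ l, (if P6 t 0 = k ∧ P6 t 1 = l then w t else 0) := by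
    intro t
    simp [ite_and]
  have e : ∑ t, w t = ∑ t, ∑ k, ∑ l, (if P6 t 0 = k ∧ P6 t 1 = l then w t else 0) :=
    Finset.sum_congr rfl fun t _ => this t
  rw [e, Finset.sum_comm (s := (Finset.univ : Finset (Fin 6)))]
  exact Finset.sum_congr rfl fun k _ => Finset.sum_comm

lemma aux_lower (A B : Matrix (Fin 3) (Fin 3) ℝ) {X : Matrix (Fin 3) (Fin 3) ℝ}
    {Y : Matrix (Fin 3 × Fin 3) (Fin 3 × Fin 3) ℝ} (h : SDPFeasible X Y) :
    ⨅ σ : Equiv.Perm (Fin 3), ∑ i, ∑ j, A i j * B (σ i) (σ j) ≤ sdpObj A B Y := by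
  rw [aux_obj A B _ (aux_decomp h)]
  have hs : ∑ t, Y (0, P6 t 0) (1, P6 t 1) = 1 := by
    rw [← h.2.2.1 0 1]
    rw [Finset.sum_congr rfl fun k _ => Finset.sum_congr rfl fun l _ => aux_decomp h 0 k 1 l]
    exact (aux_sum fun t => Y (0, P6 t 0) (1, P6 t 1)).symm
  calc _ = ∑ t, Y (0, P6 t 0) (1, P6 t 1) *
        ⨅ σ : Equiv.Perm (Fin 3), ∑ i, ∑ j, A i j * B (σ i) (σ j) := by
        rw [← Finset.sum_mul, hs, one_mul]
    _ ≤ _ := by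
        refine Finset.sum_le_sum fun t _ => mul_le_mul_of_nonneg_left ?_ (h.2.2.2.2.2.1 _ _)
        exact ciInf_le (Set.finite_range _).bddBelow (P6 t)

lemma aux_feas (σ : Equiv.Perm (Fin 3)) :
    SDPFeasible (Matrix.of fun i k => if σ i = k then (1 : ℝ) else 0)
      (Matrix.of fun p q => (if σ p.1 = p.2 then (1 : ℝ) else 0) *
        (if σ q.1 = q.2 then (1 : ℝ) else 0)) := by
  have hc : ∀ k, ∑ i, (if σ i = k then (1 : ℝ) else 0) = 1 := by
    intro k
    rw [Finset.sum_eq_single (σ.symm k)]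
    · simp
    · intro b _ hb
      rw [if_neg]
      rintro rfl
      simp at hb
    · simp
  refine ⟨?_, ?_, ?_, ?_, ?_, ?_, ?_, ?_, ?_⟩
  · convert Matrix.PosSemidef.zero using 1
    ext p q
    simp [vecMulVec_apply, vecM]
  · intro k l
    simp only [Matrix.of_apply, ← Finset.mul_sum, hc, mul_one]
  · intro k l
    simp
  · intro k i j hij
    simp only [Matrix.of_apply]
    by_cases h : σ i = k
    · rw [if_neg (c := σ j = k), mul_zero]
      intro h'
      exact hij (σ.injective (h.trans h'.symm))
    · simp [h]
  · intro k i j hij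
    simp only [Matrix.of_apply]
    by_cases h : σ k = i
    · rw [if_neg (c := σ k = j), mul_zero]
      intro h'
      exact hij (h.symm.trans h')
    · simp [h]
  · intro p q
    simp only [Matrix.of_apply]
    positivity
  · intro i
    simp
  · intro k
    simpa using hc k
  · intro i j
    simp only [Matrix.of_apply]
    positivity

lemma aux_feas_obj (A B : Matrix (Fin 3) (Fin 3) ℝ) (σ : Equiv.Perm (Fin 3)) :
    sdpObj A B (Matrix.of fun p q => (if σ p.1 = p.2 then (1 : ℝ) else 0) *
        (if σ q.1 = q.2 then (1 : ℝ) else 0)) = ∑ i, ∑ j, A i j * B (σ i) (σ j) := by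
  simp [sdpObj, kron, Fintype.sum_prod_type, ← ite_and]
  simp [ite_and]

/-- Theorem 2: for `n = 3` the SDP relaxation of the QAP is exact. -/
theorem stmt1 (A B : Matrix (Fin 3) (Fin 3) ℝ) (hA : A.IsSymm) (hB : B.IsSymm) :
    sInf {r : ℝ | ∃ (X : Matrix (Fin 3) (Fin 3) ℝ)
        (Y : Matrix (Fin 3 × Fin 3) (Fin 3 × Fin 3) ℝ),
        SDPFeasible X Y ∧ sdpObj A B Y = r} =
      ⨅ σ : Equiv.Perm (Fin 3), ∑ i, ∑ j, A i j * B (σ i) (σ j) := by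
  have hlb : ∀ r ∈ {r : ℝ | ∃ (X : Matrix (Fin 3) (Fin 3) ℝ)
        (Y : Matrix (Fin 3 × Fin 3) (Fin 3 × Fin 3) ℝ),
        SDPFeasible X Y ∧ sdpObj A B Y = r},
      ⨅ σ : Equiv.Perm (Fin 3), ∑ i, ∑ j, A i j * B (σ i) (σ j) ≤ r := by
    rintro r ⟨X, Y, h, rfl⟩
    exact aux_lower A B h
  apply le_antisymm
  · refine le_ciInf fun σ => csInf_le ⟨_, hlb⟩ ⟨_, _, aux_feas σ, aux_feas_obj A B σ⟩
  · exact le_csInf ⟨_, _, _, aux_feas 1, rfl⟩ hlb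
end
end

section
/- Let C and Δ be symmetric n×n real matrices, and set A = C + Δ and B = −C + Δ. Suppose 2(Δ_{ij}² + Δ_{kl}²) ≤ (C_{ij} − C_{kl} + Δ_{ij} + Δ_{kl})² holds for all i,j,k,l ∈ [n] with (i ≠ j and k ≠ l) or (i = j and k = l). Then (I, vec(I)vec(I)ᵀ) is an optimal solution to the SDP relaxation: it is feasible and every feasible pair (X, 𝐗) satisfies ⟨A⊗B, 𝐗⟩ ≥ Σ_{i,j} A_{ij}B_{ij}. -/
open Matrix BigOperators

noncomputable section

/-- Theorem 3 (perturbation model): with `A = C + D`, `B = -C + D` and the quadratic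
perturbation condition, `(I, vec(I)vec(I)ᵀ)` is optimal for the SDP relaxation. -/
theorem stmt2 {n : ℕ} (C D : Matrix (Fin n) (Fin n) ℝ)
    (hC : C.IsSymm) (hD : D.IsSymm)
    (h : ∀ i j k l, ((i ≠ j ∧ k ≠ l) ∨ (i = j ∧ k = l)) →
      2 * (D i j ^ 2 + D k l ^ 2) ≤ (C i j - C k l + D i j + D k l) ^ 2) :
    SDPFeasible (1 : Matrix (Fin n) (Fin n) ℝ)
      (vecMulVec (vecM (1 : Matrix (Fin n) (Fin n) ℝ))
        (vecM (1 : Matrix (Fin n) (Fin n) ℝ))) ∧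
    (∀ (X : Matrix (Fin n) (Fin n) ℝ)
        (Y : Matrix (Fin n × Fin n) (Fin n × Fin n) ℝ),
      SDPFeasible X Y →
        sdpObj (C + D) (-C + D) Y ≥ ∑ i, ∑ j, (C + D) i j * (-C + D) i j) := by
  refine ⟨?_, ?_⟩
  · refine ⟨?_, ?_, ?_, ?_, ?_, ?_, ?_, ?_, ?_⟩
    · rw [sub_self]
      exact Matrix.PosSemidef.zero
    · intro k l
      simp [vecMulVec_apply, vecM, Matrix.one_apply]
    · intro k l
      simp [vecMulVec_apply, vecM, Matrix.one_apply]
    · intro k i j hij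
      simp only [vecMulVec_apply, vecM, Matrix.one_apply]
      grind
    · intro k i j hij
      simp only [vecMulVec_apply, vecM, Matrix.one_apply]
      grind
    · intro p q
      simp only [vecMulVec_apply, vecM, Matrix.one_apply]
      split_ifs <;> norm_num
    · intro i
      simp [Matrix.one_apply]
    · intro i
      simp [Matrix.one_apply]
    · intro i j
      simp only [Matrix.one_apply]
      split_ifs <;> norm_num
  · rintro X Y ⟨-, h1, h2, h3, h4, h5, -⟩
    have key : ∀ i j k l, ((D i j ^ 2 - (C i j + D i j) ^ 2 / 2) +
        (D k l ^ 2 - (-C k l + D k l) ^ 2 / 2)) * Y (i, k) (j, l) ≤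
        ((C i j + D i j) * (-C k l + D k l)) * Y (i, k) (j, l) := by
      intro i j k l
      by_cases hc : (i ≠ j ∧ k ≠ l) ∨ (i = j ∧ k = l)
      · refine mul_le_mul_of_nonneg_right ?_ (h5 _ _)
        have := h i j k l hc
        nlinarith
      · have h0 : Y (i, k) (j, l) = 0 := by
          by_cases hij : i = j
          · subst hij
            exact h4 _ _ _ (fun e => hc (Or.inr ⟨rfl, e⟩))
          · have hkl : k = l := by
              by_contra hkl
              exact hc (Or.inl ⟨hij, hkl⟩)
            subst hkl
            exact h3 _ _ _ hij
        simp [h0]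
    have e1 : ∀ F : Fin n → Fin n → ℝ,
        ∑ i, ∑ k, ∑ j, ∑ l, F i j * Y (i, k) (j, l) = ∑ i, ∑ j, F i j := by
      intro F
      refine Finset.sum_congr rfl fun i _ => ?_
      rw [Finset.sum_comm]
      refine Finset.sum_congr rfl fun j _ => ?_
      simp_rw [← Finset.mul_sum]
      rw [h2, mul_one]
    have e2 : ∀ G : Fin n → Fin n → ℝ,
        ∑ i, ∑ k, ∑ j, ∑ l, G k l * Y (i, k) (j, l) = ∑ k, ∑ l, G k l := by
      intro G
      rw [Finset.sum_comm]
      refine Finset.sum_congr rfl fun k _ => ?_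
      have : ∀ i, ∑ j, ∑ l, G k l * Y (i, k) (j, l) = ∑ l, ∑ j, G k l * Y (i, k) (j, l) :=
        fun i => Finset.sum_comm
      simp_rw [this]
      rw [Finset.sum_comm]
      refine Finset.sum_congr rfl fun l _ => ?_
      simp_rw [← Finset.mul_sum]
      rw [h1, mul_one]
    have e3 : sdpObj (C + D) (-C + D) Y = ∑ i, ∑ k, ∑ j, ∑ l,
        ((C i j + D i j) * (-C k l + D k l)) * Y (i, k) (j, l) := by
      simp only [sdpObj, kron, Fintype.sum_prod_type, Matrix.of_apply, Matrix.add_apply,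
        Matrix.neg_apply]
    have e4 := Finset.sum_le_sum fun i (_ : i ∈ Finset.univ) =>
      Finset.sum_le_sum fun k (_ : k ∈ Finset.univ) =>
      Finset.sum_le_sum fun j (_ : j ∈ Finset.univ) =>
      Finset.sum_le_sum fun l (_ : l ∈ Finset.univ) => key i j k l
    rw [← e3] at e4
    refine ge_trans e4 (le_of_eq ?_)
    simp only [add_mul _ _ (Y _ _), Finset.sum_add_distrib]
    rw [e1 (fun i j => D i j ^ 2 - (C i j + D i j) ^ 2 / 2),
      e2 (fun k l => D k l ^ 2 - (-C k l + D k l) ^ 2 / 2), ← Finset.sum_add_distrib]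
    refine Finset.sum_congr rfl fun i _ => ?_
    rw [← Finset.sum_add_distrib]
    refine Finset.sum_congr rfl fun j _ => ?_
    simp only [Matrix.add_apply, Matrix.neg_apply]
    ring
end
end

section
/- Let A and −B be symmetric n×n matrices with entries in {0,1} and zero diagonal (adjacency matrices of graphs 𝒢_A and 𝒢_B), and suppose 𝒢_A is a subgraph of 𝒢_B, i.e., A_{ij} = 1 implies B_{ij} = −1 for all i,j. Then (I, vec(I)vec(I)ᵀ) is an optimal solution to the SDP relaxation: it is feasible and every feasible pair (X, 𝐗) satisfies ⟨A⊗B, 𝐗⟩ ≥ Σ_{i,j} A_{ij}B_{ij}. -/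
open Matrix BigOperators

noncomputable section

/-- Theorem 4 (graph matching / subgraph isomorphism): if `A` and `-B` are adjacency
matrices and the graph of `A` is a subgraph of that of `-B`, then `(I, vec(I)vec(I)ᵀ)`
is optimal for the SDP relaxation. -/
theorem stmt3 {n : ℕ} (A B : Matrix (Fin n) (Fin n) ℝ)
    (hA : A.IsSymm) (hB : B.IsSymm)
    (hA01 : ∀ i j, A i j = 0 ∨ A i j = 1)
    (hB01 : ∀ i j, B i j = 0 ∨ B i j = -1)
    (hAdiag : ∀ i, A i i = 0) (hBdiag : ∀ i, B i i = 0)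
    (hsub : ∀ i j, A i j = 1 → B i j = -1) :
    SDPFeasible (1 : Matrix (Fin n) (Fin n) ℝ)
      (vecMulVec (vecM (1 : Matrix (Fin n) (Fin n) ℝ))
        (vecM (1 : Matrix (Fin n) (Fin n) ℝ))) ∧
    (∀ (X : Matrix (Fin n) (Fin n) ℝ)
        (Y : Matrix (Fin n × Fin n) (Fin n × Fin n) ℝ),
      SDPFeasible X Y → sdpObj A B Y ≥ ∑ i, ∑ j, A i j * B i j) := by
  refine ⟨⟨?_, ?_, ?_, ?_, ?_, ?_, ?_, ?_, ?_⟩, ?_⟩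
  · rw [sub_self]; exact Matrix.PosSemidef.zero
  · intro k l
    simp [vecMulVec_apply, vecM, Matrix.one_apply]
  · intro k l
    simp [vecMulVec_apply, vecM, Matrix.one_apply]
  · intro k i j hij
    simp only [vecMulVec_apply, vecM, Matrix.one_apply]
    grind
  · intro k i j hij
    simp only [vecMulVec_apply, vecM, Matrix.one_apply]
    grind
  · intro p q
    simp only [vecMulVec_apply, vecM, Matrix.one_apply]
    split_ifs <;> norm_num
  · intro i
    simp [Matrix.one_apply]
  · intro i
    simp [Matrix.one_apply]
  · intro i j
    simp only [Matrix.one_apply]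
    split_ifs <;> norm_num
  · rintro X Y ⟨-, -, hrow, -, -, hpos, -⟩
    have h1 : sdpObj A B Y = ∑ i, ∑ j, ∑ k, ∑ l, A i j * B k l * Y (i, k) (j, l) := by
      unfold sdpObj
      simp only [Fintype.sum_prod_type, kron, Matrix.of_apply]
      refine Finset.sum_congr rfl fun i _ => ?_
      rw [Finset.sum_comm]
    rw [h1, ge_iff_le]
    refine Finset.sum_le_sum fun i _ => Finset.sum_le_sum fun j _ => ?_
    rcases hA01 i j with h | h
    · simp [h]
    · rw [h, hsub i j h]
      calc (1 : ℝ) * -1 = ∑ k, ∑ l, -Y (i, k) (j, l) := by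
            simp only [Finset.sum_neg_distrib, hrow]; norm_num
        _ ≤ _ := by
            refine Finset.sum_le_sum fun k _ => Finset.sum_le_sum fun l _ => ?_
            have := hpos (i, k) (j, l)
            rcases hB01 k l with hb | hb <;> rw [hb] <;> linarith
end
end

section
/- Let A, B be symmetric n×n real matrices satisfying A_{ij}B_{ij} + A_{kl}B_{kl} ≤ 2·min{A_{ij}B_{kl}, A_{kl}B_{ij}} for all i,j,k,l ∈ [n]. Then (I, vec(I)vec(I)ᵀ) is an optimal solution to the SDP relaxation: it is feasible and every feasible pair (X, 𝐗) satisfies ⟨A⊗B, 𝐗⟩ ≥ Σ_{i,j} A_{ij}B_{ij}. -/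
open Matrix BigOperators

noncomputable section

/-- Theorem 5 (comonotonicity condition): under the strengthened rearrangement
condition, `(I, vec(I)vec(I)ᵀ)` is optimal for the SDP relaxation. -/
theorem stmt4 {n : ℕ} (A B : Matrix (Fin n) (Fin n) ℝ)
    (hA : A.IsSymm) (hB : B.IsSymm)
    (h : ∀ i j k l,
      A i j * B i j + A k l * B k l ≤ 2 * min (A i j * B k l) (A k l * B i j)) :
    SDPFeasible (1 : Matrix (Fin n) (Fin n) ℝ)
      (vecMulVec (vecM (1 : Matrix (Fin n) (Fin n) ℝ))
        (vecM (1 : Matrix (Fin n) (Fin n) ℝ))) ∧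
    (∀ (X : Matrix (Fin n) (Fin n) ℝ)
        (Y : Matrix (Fin n × Fin n) (Fin n × Fin n) ℝ),
      SDPFeasible X Y → sdpObj A B Y ≥ ∑ i, ∑ j, A i j * B i j) := by
  refine ⟨⟨?_, ?_, ?_, ?_, ?_, ?_, ?_, ?_, ?_⟩, ?_⟩
  · rw [sub_self]; exact Matrix.PosSemidef.zero
  · intro k l
    simp [vecMulVec_apply, vecM, Matrix.one_apply]
  · intro k l
    simp [vecMulVec_apply, vecM, Matrix.one_apply]
  · intro k i j hij
    simp only [vecMulVec_apply, vecM, Matrix.one_apply]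
    split_ifs <;> simp_all
  · intro k i j hij
    simp only [vecMulVec_apply, vecM, Matrix.one_apply]
    split_ifs <;> simp_all
  · intro p q
    simp only [vecMulVec_apply, vecM, Matrix.one_apply]
    split_ifs <;> simp
  · intro i; simp [Matrix.one_apply]
  · intro i; simp [Matrix.one_apply]
  · intro i j; simp only [Matrix.one_apply]; split_ifs <;> simp
  · rintro X Y ⟨-, h1, h2, -, -, hY, -⟩
    have e1 : ∑ p : Fin n × Fin n, ∑ q : Fin n × Fin n, A p.1 q.1 * B p.1 q.1 * Y p q
        = ∑ i, ∑ j, A i j * B i j := by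
      simp only [Fintype.sum_prod_type]
      refine Finset.sum_congr rfl fun i _ => ?_
      rw [Finset.sum_comm]
      refine Finset.sum_congr rfl fun j _ => ?_
      simp only [← Finset.mul_sum]
      rw [h2, mul_one]
    have e2 : ∑ p : Fin n × Fin n, ∑ q : Fin n × Fin n, A p.2 q.2 * B p.2 q.2 * Y p q
        = ∑ i, ∑ j, A i j * B i j := by
      simp only [Fintype.sum_prod_type_right]
      refine Finset.sum_congr rfl fun i _ => ?_
      rw [Finset.sum_comm]
      refine Finset.sum_congr rfl fun j _ => ?_
      simp only [← Finset.mul_sum]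
      rw [h1, mul_one]
    have key : ∑ p : Fin n × Fin n, ∑ q : Fin n × Fin n, A p.1 q.1 * B p.1 q.1 * Y p q
        + ∑ p : Fin n × Fin n, ∑ q : Fin n × Fin n, A p.2 q.2 * B p.2 q.2 * Y p q
        ≤ 2 * sdpObj A B Y := by
      simp only [sdpObj, Finset.mul_sum, ← Finset.sum_add_distrib]
      refine Finset.sum_le_sum fun p _ => Finset.sum_le_sum fun q _ => ?_
      have h3 := h p.1 q.1 p.2 q.2
      have h4 := min_le_left (A p.1 q.1 * B p.2 q.2) (A p.2 q.2 * B p.1 q.1)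
      have h5 : A p.1 q.1 * B p.1 q.1 + A p.2 q.2 * B p.2 q.2 ≤ 2 * (A p.1 q.1 * B p.2 q.2) := by
        linarith
      have h6 := mul_le_mul_of_nonneg_right h5 (hY p q)
      simp only [kron, Matrix.of_apply]
      linarith
    rw [e1, e2] at key
    linarith
end
end

section
/- Let A, B be symmetric n×n real matrices and let x ∈ ℝ^{n²}. Consider the primal problem: minimize ⟨A⊗B, 𝐗⟩ over 𝐗 ∈ ℝ^{n²×n²} subject to 𝐗 − xxᵀ positive semidefinite, Σ_{i,j} 𝐗_{(i,k),(j,l)} = 1 and Σ_{i,j} 𝐗_{(k,i),(l,j)} = 1 for all k,l, 𝐗_{(i,k),(j,k)} = 0 and 𝐗_{(k,i),(k,j)} = 0 for all k and all i ≠ j, and 𝐗 entrywise nonnegative. Consider the dual problem: maximize xᵀ(A⊗B + G⊗E + E⊗H − 𝐙)x − ⟨G + H, E⟩ over G, H ∈ ℝ^{n×n} and 𝐙 ∈ ℝ^{n²×n²} subject to A⊗B + G⊗E + E⊗H − 𝐙 positive semidefinite and 𝐙_{(i,k),(j,l)} ≥ 0 whenever (i ≠ j and k ≠ l) or (i = j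 and k = l). Then strong duality holds: the infimum of the primal equals the supremum of the dual (as extended real numbers). -/
open Matrix BigOperators

noncomputable section

/-- The set of primal objective values of the inner SDP (with `x` fixed). -/
def PrimalVals {n : ℕ} (A B : Matrix (Fin n) (Fin n) ℝ)
    (x : Fin n × Fin n → ℝ) : Set ℝ :=
  {r | ∃ Y : Matrix (Fin n × Fin n) (Fin n × Fin n) ℝ,
    (Y - vecMulVec x x).PosSemidef ∧
    (∀ k l, ∑ i, ∑ j, Y (i, k) (j, l) = 1) ∧
    (∀ k l, ∑ i, ∑ j, Y (k, i) (l, j) = 1) ∧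
    (∀ k i j, i ≠ j → Y (i, k) (j, k) = 0) ∧
    (∀ k i j, i ≠ j → Y (k, i) (k, j) = 0) ∧
    (∀ p q, 0 ≤ Y p q) ∧
    (∑ p, ∑ q, kron A B p q * Y p q) = r}

/-- The set of dual objective values. -/
def DualVals {n : ℕ} (A B : Matrix (Fin n) (Fin n) ℝ)
    (x : Fin n × Fin n → ℝ) : Set ℝ :=
  {r | ∃ (G H : Matrix (Fin n) (Fin n) ℝ)
      (Z : Matrix (Fin n × Fin n) (Fin n × Fin n) ℝ),
    (kron A B + kron G (Eall n) + kron (Eall n) H - Z).PosSemidef ∧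
    (∀ i j k l, ((i ≠ j ∧ k ≠ l) ∨ (i = j ∧ k = l)) → 0 ≤ Z (i, k) (j, l)) ∧
    (∑ p, ∑ q, x p * ((kron A B + kron G (Eall n) + kron (Eall n) H - Z) p q) * x q)
      - (∑ i, ∑ j, (G + H) i j * Eall n i j) = r}

namespace Stmt5Aux

variable {n : ℕ}

/-- Matrices indexed by pairs. -/
abbrev MP (n : ℕ) := Matrix (Fin n × Fin n) (Fin n × Fin n) ℝ
/-- Square matrices. -/
abbrev MN (n : ℕ) := Matrix (Fin n) (Fin n) ℝ

/-- The quadratic form `vᵀ N v`, linear in `N`. -/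
def qf (v : Fin n × Fin n → ℝ) : MP n →ₗ[ℝ] ℝ where
  toFun N := ∑ p, ∑ q, v p * N p q * v q
  map_add' M N := by
    simp only [Matrix.add_apply, mul_add, add_mul, Finset.sum_add_distrib]
  map_smul' c N := by
    simp only [Matrix.smul_apply, smul_eq_mul, Finset.mul_sum, RingHom.id_apply]
    refine Finset.sum_congr rfl fun p _ => Finset.sum_congr rfl fun q _ => by ring

lemma qf_apply (v : Fin n × Fin n → ℝ) (N : MP n) :
    qf v N = ∑ p, ∑ q, v p * N p q * v q := rfl

lemma qf_transpose (v : Fin n × Fin n → ℝ) (N : MP n) : qf v Nᵀ = qf v N := by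
  simp only [qf_apply, Matrix.transpose_apply]
  rw [Finset.sum_comm]
  refine Finset.sum_congr rfl fun p _ => Finset.sum_congr rfl fun q _ => by ring

lemma psd_iff (N : MP n) : N.PosSemidef ↔ Nᵀ = N ∧ ∀ v, 0 ≤ qf v N := by
  rw [posSemidef_iff_dotProduct_mulVec]
  have : ∀ v : Fin n × Fin n → ℝ, star v ⬝ᵥ (N *ᵥ v) = qf v N := by
    intro v
    simp only [qf_apply, dotProduct, mulVec, Finset.mul_sum, star_trivial, mul_assoc]
  simp only [this, Matrix.IsHermitian, conjTranspose_eq_transpose_of_trivial]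

/-- Sign condition on `Z`. -/
def zok (Z : MP n) : Prop :=
  ∀ i j k l, ((i ≠ j ∧ k ≠ l) ∨ (i = j ∧ k = l)) → 0 ≤ Z (i, k) (j, l)

/-- The linear part of the dual slack matrix. -/
def LL : (MN n × MN n × MP n) →ₗ[ℝ] MP n where
  toFun y := kron y.1 (Eall n) + kron (Eall n) y.2.1 - y.2.2
  map_add' y z := by
    ext p q
    simp [kron, Eall]; ring
  map_smul' c y := by
    ext p q
    simp [kron, Eall]; ring

/-- The linear functional `⟨G + H, E⟩`. -/
def ev : (MN n × MN n × MP n) →ₗ[ℝ] ℝ where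
  toFun y := ∑ i, ∑ j, (y.1 + y.2.1) i j * Eall n i j
  map_add' y z := by
    simp only [← Finset.sum_add_distrib]
    refine Finset.sum_congr rfl fun p _ => Finset.sum_congr rfl fun q _ => ?_
    simp [Eall]; ring
  map_smul' c y := by
    simp only [RingHom.id_apply, smul_eq_mul, Finset.mul_sum]
    refine Finset.sum_congr rfl fun p _ => Finset.sum_congr rfl fun q _ => ?_
    simp [Eall]; ring

lemma LL_apply (G H : MN n) (Z : MP n) :
    LL (G, H, Z) = kron G (Eall n) + kron (Eall n) H - Z := rfl

lemma ev_apply (G H : MN n) (Z : MP n) :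
    ev (G, H, Z) = ∑ i, ∑ j, (G + H) i j * Eall n i j := rfl

lemma zok_add {Z W : MP n} (hZ : zok Z) (hW : zok W) : zok (Z + W) :=
  fun i j k l h => add_nonneg (hZ i j k l h) (hW i j k l h)

lemma zok_smul {Z : MP n} (hZ : zok Z) {c : ℝ} (hc : 0 ≤ c) : zok (c • Z) :=
  fun i j k l h => mul_nonneg hc (hZ i j k l h)

lemma zok_zero : zok (0 : MP n) := fun _ _ _ _ _ => le_rfl

/-- Large multiples of the identity dominate. -/
lemma exists_dom (N : MP n) : ∃ c : ℝ, ∀ v, 0 ≤ qf v (N + c • (1 : MP n)) := by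
  refine ⟨∑ p, ∑ q, |N p q|, fun v => ?_⟩
  have h1 : qf v (1 : MP n) = ∑ p, v p ^ 2 := by
    simp [qf_apply, Matrix.one_apply, sq]
  rw [map_add, map_smul, h1, smul_eq_mul, qf_apply, Finset.sum_mul, ← Finset.sum_add_distrib]
  refine Finset.sum_nonneg fun p _ => ?_
  rw [Finset.sum_mul, ← Finset.sum_add_distrib]
  refine Finset.sum_nonneg fun q _ => ?_
  have hp : v p ^ 2 ≤ ∑ p, v p ^ 2 :=
    Finset.single_le_sum (f := fun p => v p ^ 2) (fun i _ => sq_nonneg _) (Finset.mem_univ p)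
  have hq : v q ^ 2 ≤ ∑ p, v p ^ 2 :=
    Finset.single_le_sum (f := fun p => v p ^ 2) (fun i _ => sq_nonneg _) (Finset.mem_univ q)
  have hpq : |v p * v q| ≤ ∑ p, v p ^ 2 := by
    rw [abs_le]; constructor <;> nlinarith [sq_nonneg (v p + v q), sq_nonneg (v p - v q)]
  have h2 : |v p * N p q * v q| ≤ |N p q| * ∑ p, v p ^ 2 := by
    calc |v p * N p q * v q| = |N p q| * |v p * v q| := by
          rw [← abs_mul]; congr 1; ring
      _ ≤ _ := mul_le_mul_of_nonneg_left hpq (abs_nonneg _)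
  linarith [neg_abs_le (v p * N p q * v q)]

/-- The identity lies in the range of the dual slack map. -/
lemma exists_one (c : ℝ) : ∃ y : MN n × MN n × MP n, zok y.2.2 ∧ LL y = c • (1 : MP n) := by
  refine ⟨(c • 1, 0, Matrix.of fun p q => if p.1 = q.1 ∧ p.2 ≠ q.2 then c else 0), ?_, ?_⟩
  · rintro i j k l (⟨h1, h2⟩ | ⟨h1, h2⟩) <;> simp [h1, h2]
  · ext ⟨i, k⟩ ⟨j, l⟩
    by_cases h1 : i = j <;> by_cases h2 : k = l <;>
      simp [LL_apply, kron, Eall, Matrix.one_apply, h1, h2]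

lemma dual_mem (A B : MN n) (hA : A.IsSymm) (hB : B.IsSymm) (x : Fin n × Fin n → ℝ)
    (y : MN n × MN n × MP n) (hz : zok y.2.2) (hq : ∀ v, 0 ≤ qf v (kron A B + LL y)) :
    qf x (kron A B + LL y) - ev y ∈ DualVals A B x := by
  obtain ⟨G, H, Z⟩ := y
  have hK : (kron A B)ᵀ = kron A B := by
    ext p q
    simp only [kron, Matrix.transpose_apply, Matrix.of_apply]
    rw [hA.apply, hB.apply]
  have hLT : LL (Gᵀ, Hᵀ, Zᵀ) = (LL (G, H, Z))ᵀ := by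
    ext p q
    simp [LL_apply, kron, Eall]
  have heT : ev (Gᵀ, Hᵀ, Zᵀ) = ev (G, H, Z) := by
    simp only [ev_apply, Eall, Matrix.of_apply, mul_one, Matrix.add_apply, Matrix.transpose_apply]
    rw [Finset.sum_comm]
  set y : MN n × MN n × MP n := (G, H, Z) with hy
  set w : MN n × MN n × MP n := (1/2 : ℝ) • (y + (Gᵀ, Hᵀ, Zᵀ)) with hw
  have hLw : kron A B + LL w = (1/2 : ℝ) • ((kron A B + LL y) + (kron A B + LL y)ᵀ) := by
    rw [hw, map_smul, map_add, hLT, Matrix.transpose_add, hK]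
    module
  have hqw : ∀ v, qf v (kron A B + LL w) = qf v (kron A B + LL y) := by
    intro v
    rw [hLw, map_smul, map_add, qf_transpose, smul_eq_mul]; ring
  have hew : ev w = ev y := by
    rw [hw, map_smul, map_add, heT, smul_eq_mul]; ring
  have hM : kron A B + kron w.1 (Eall n) + kron (Eall n) w.2.1 - w.2.2 = kron A B + LL w := by
    have : LL w = kron w.1 (Eall n) + kron (Eall n) w.2.1 - w.2.2 := rfl
    rw [this]; abel
  refine ⟨w.1, w.2.1, w.2.2, ?_, ?_, ?_⟩
  · rw [hM, psd_iff]
    refine ⟨?_, fun v => by rw [hqw]; exact hq v⟩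
    rw [hLw, Matrix.transpose_smul, Matrix.transpose_add, Matrix.transpose_transpose, add_comm]
  · intro i j k l h
    have h1 : 0 ≤ Z (i, k) (j, l) := hz i j k l h
    have h2 : 0 ≤ Z (j, l) (i, k) := hz j i l k (by
      rcases h with ⟨a, b⟩ | ⟨a, b⟩
      · exact Or.inl ⟨a.symm, b.symm⟩
      · exact Or.inr ⟨a.symm, b.symm⟩)
    have : w.2.2 (i, k) (j, l) = (1/2 : ℝ) * (Z (i, k) (j, l) + Z (j, l) (i, k)) := by
      simp [hw, hy]; ring
    rw [this]; positivity
  · rw [hM, ← hqw, ← hew]; rfl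

lemma sum_kron_left (G : MN n) (Y : MP n) : ∑ p, ∑ q, kron G (Eall n) p q * Y p q =
    ∑ i, ∑ j, G i j * ∑ k, ∑ l, Y (i, k) (j, l) := by
  simp only [Fintype.sum_prod_type, kron, Eall, Matrix.of_apply, mul_one]
  refine Finset.sum_congr rfl fun i _ => ?_
  rw [Finset.sum_comm]
  refine Finset.sum_congr rfl fun j _ => ?_
  simp only [← Finset.mul_sum]

lemma weak (A B : MN n) (x : Fin n × Fin n → ℝ) {r s : ℝ}
    (hr : r ∈ PrimalVals A B x) (hs : s ∈ DualVals A B x) : s ≤ r := by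
  obtain ⟨Y, hY, h1, h2, h3, h4, h5, rfl⟩ := hr
  obtain ⟨G, H, Z, hM, hZ, rfl⟩ := hs
  have hh := ((psd_iff _).1 (hM.hadamard hY)).2 (fun _ => 1)
  simp only [qf_apply, one_mul, mul_one, Matrix.hadamard_apply, Matrix.sub_apply (_ : MP n) (vecMulVec x x),
    vecMulVec_apply] at hh
  have hG : ∑ p, ∑ q, kron G (Eall n) p q * Y p q = ∑ i, ∑ j, G i j := by
    simp only [Fintype.sum_prod_type, kron, Eall, Matrix.of_apply, mul_one]
    refine Finset.sum_congr rfl fun i _ => ?_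
    rw [Finset.sum_comm]
    refine Finset.sum_congr rfl fun j _ => ?_
    simp only [← Finset.mul_sum]
    rw [h2, mul_one]
  have hH : ∑ p, ∑ q, kron (Eall n) H p q * Y p q = ∑ i, ∑ j, H i j := by
    simp only [Fintype.sum_prod_type, kron, Eall, Matrix.of_apply, one_mul]
    rw [Finset.sum_comm]
    refine Finset.sum_congr rfl fun i _ => ?_
    rw [Finset.sum_congr rfl fun _ _ => Finset.sum_comm, Finset.sum_comm]
    refine Finset.sum_congr rfl fun j _ => ?_
    simp only [← Finset.mul_sum]
    rw [h1, mul_one]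
  have hZY : 0 ≤ ∑ p, ∑ q, Z p q * Y p q := by
    refine Finset.sum_nonneg fun p _ => Finset.sum_nonneg fun q _ => ?_
    obtain ⟨i, k⟩ := p
    obtain ⟨j, l⟩ := q
    by_cases hij : i = j <;> by_cases hkl : k = l
    · exact mul_nonneg (hZ _ _ _ _ (Or.inr ⟨hij, hkl⟩)) (h5 _ _)
    · subst hij; rw [h4 _ _ _ hkl, mul_zero]
    · subst hkl; rw [h3 _ _ _ hij, mul_zero]
    · exact mul_nonneg (hZ _ _ _ _ (Or.inl ⟨hij, hkl⟩)) (h5 _ _)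
  have hE : ∑ i, ∑ j, (G + H) i j * Eall n i j = ∑ i, ∑ j, G i j + ∑ i, ∑ j, H i j := by
    simp [Eall, Finset.sum_add_distrib]
  rw [hE, ← hG, ← hH]
  set M := kron A B + kron G (Eall n) + kron (Eall n) H - Z with hMdef
  have e1 : ∑ p, ∑ q, M p q * (Y p q - x p * x q) =
      ∑ p, ∑ q, M p q * Y p q - ∑ p, ∑ q, x p * M p q * x q := by
    simp only [← Finset.sum_sub_distrib]
    refine Finset.sum_congr rfl fun p _ => Finset.sum_congr rfl fun q _ => by ring
  have e2 : ∑ p, ∑ q, M p q * Y p q = ∑ p, ∑ q, kron A B p q * Y p q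
      + ∑ p, ∑ q, kron G (Eall n) p q * Y p q + ∑ p, ∑ q, kron (Eall n) H p q * Y p q
      - ∑ p, ∑ q, Z p q * Y p q := by
    simp only [← Finset.sum_sub_distrib, ← Finset.sum_add_distrib]
    refine Finset.sum_congr rfl fun p _ => Finset.sum_congr rfl fun q _ => ?_
    simp only [hMdef, Matrix.sub_apply, Matrix.add_apply]; ring
  have hh' : 0 ≤ ∑ p, ∑ q, M p q * (Y p q - x p * x q) := hh
  linarith

/-- The cone used in the Riesz extension argument. -/
def cone (A B : MN n) (x : Fin n × Fin n → ℝ) (d : ℝ) : PointedCone ℝ (MP n × ℝ) where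
  carrier := {w | ∃ (τ : ℝ) (y : MN n × MN n × MP n), 0 ≤ τ ∧ zok y.2.2 ∧
    (∀ v, 0 ≤ qf v (w.1 + τ • kron A B + LL y)) ∧
    τ * d + ev y ≤ w.2 + qf x (w.1 + τ • kron A B + LL y)}
  zero_mem' := ⟨0, 0, le_rfl, zok_zero, by simp, by simp⟩
  add_mem' := by
    rintro a b ⟨τ, y, h1, h2, h3, h4⟩ ⟨σ, z, k1, k2, k3, k4⟩
    have e : (a + b).1 + (τ + σ) • kron A B + LL (y + z) =
        (a.1 + τ • kron A B + LL y) + (b.1 + σ • kron A B + LL z) := by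
      rw [map_add, Prod.fst_add]; module
    refine ⟨τ + σ, y + z, add_nonneg h1 k1, zok_add h2 k2, fun v => ?_, ?_⟩
    · rw [e, map_add]; exact add_nonneg (h3 v) (k3 v)
    · rw [e, map_add, map_add, Prod.snd_add]; linarith
  smul_mem' := by
    rintro ⟨c, hc⟩ a ⟨τ, y, h1, h2, h3, h4⟩
    have e : (c • a).1 + (c * τ) • kron A B + LL (c • y) =
        c • (a.1 + τ • kron A B + LL y) := by
      rw [map_smul, Prod.smul_fst]; module
    refine ⟨c * τ, c • y, mul_nonneg hc h1, zok_smul h2 hc, fun v => ?_, ?_⟩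
    · change 0 ≤ qf v ((c • a).1 + (c * τ) • kron A B + LL (c • y))
      rw [e, map_smul]; exact mul_nonneg hc (h3 v)
    · change c * τ * d + ev (c • y) ≤ (c • a).2 + qf x ((c • a).1 + (c * τ) • kron A B + LL (c • y))
      rw [e, map_smul, map_smul, Prod.smul_snd]
      simp only [smul_eq_mul]
      nlinarith [mul_le_mul_of_nonneg_left h4 hc]

lemma mem_cone (A B : MN n) (x : Fin n × Fin n → ℝ) (d : ℝ) (w : MP n × ℝ) :
    w ∈ cone A B x d ↔ ∃ (τ : ℝ) (y : MN n × MN n × MP n), 0 ≤ τ ∧ zok y.2.2 ∧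
    (∀ v, 0 ≤ qf v (w.1 + τ • kron A B + LL y)) ∧
    τ * d + ev y ≤ w.2 + qf x (w.1 + τ • kron A B + LL y) := Iff.rfl

/-- The functional on `0 × ℝ`. -/
def fpm (n : ℕ) : (MP n × ℝ) →ₗ.[ℝ] ℝ where
  domain := LinearMap.range (LinearMap.inr ℝ (MP n) ℝ)
  toFun := (LinearMap.snd ℝ (MP n) ℝ).comp (Submodule.subtype _)

lemma exists_dual (A B : MN n) : ∃ y : MN n × MN n × MP n, zok y.2.2 ∧
    ∀ v, 0 ≤ qf v (kron A B + LL y) := by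
  obtain ⟨c, hc⟩ := exists_dom (kron A B)
  obtain ⟨y, hy, e⟩ := exists_one (n := n) c
  exact ⟨y, hy, fun v => by rw [e]; exact hc v⟩

lemma cone_nonneg (A B : MN n) (hA : A.IsSymm) (hB : B.IsSymm) (x : Fin n × Fin n → ℝ) (d : ℝ)
    (hd : ∀ r ∈ DualVals A B x, r ≤ d) (t : ℝ) (h : ((0 : MP n), t) ∈ cone A B x d) : 0 ≤ t := by
  obtain ⟨τ, y, h1, h2, h3, h4⟩ := h
  simp only [zero_add] at h3 h4
  rcases h1.eq_or_lt with h0 | h0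
  · subst h0
    simp only [zero_smul, zero_add, zero_mul] at h3 h4
    obtain ⟨z, hz, hz'⟩ := exists_dual A B
    have key : ∀ c : ℝ, 0 ≤ c → qf x (kron A B + LL z) - ev z + c * (qf x (LL y) - ev y) ≤ d := by
      intro c hc
      have := hd _ (dual_mem A B hA hB x (z + c • y) (zok_add hz (zok_smul h2 hc)) (fun v => by
        rw [map_add LL, map_smul LL, ← add_assoc, map_add (qf v), map_smul (qf v)]
        exact add_nonneg (hz' v) (mul_nonneg hc (h3 v))))
      rw [map_add LL, map_smul LL, ← add_assoc, map_add (qf x), map_smul (qf x), map_add ev,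
        map_smul ev] at this
      simp only [smul_eq_mul] at this
      linarith
    by_contra ht
    push Not at ht
    have hpos : 0 < qf x (LL y) - ev y := by linarith
    set b := qf x (LL y) - ev y
    set a := qf x (kron A B + LL z) - ev z
    have := key ((|d - a| + 1) / b) (by positivity)
    rw [div_mul_cancel₀ _ hpos.ne'] at this
    linarith [le_abs_self (d - a)]
  · have e : kron A B + LL (τ⁻¹ • y) = τ⁻¹ • (τ • kron A B + LL y) := by
      rw [map_smul, smul_add, smul_smul, inv_mul_cancel₀ h0.ne', one_smul]
    have hi : 0 ≤ τ⁻¹ := by positivity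
    have := hd _ (dual_mem A B hA hB x (τ⁻¹ • y) (zok_smul h2 hi) (fun v => by
      rw [e, map_smul]; exact mul_nonneg hi (h3 v)))
    rw [e, map_smul, map_smul, smul_eq_mul, smul_eq_mul, ← mul_sub, inv_mul_le_iff₀ h0] at this
    linarith

lemma strong (A B : MN n) (hA : A.IsSymm) (hB : B.IsSymm) (x : Fin n × Fin n → ℝ) (d : ℝ)
    (hd : ∀ r ∈ DualVals A B x, r ≤ d) : ∃ r ∈ PrimalVals A B x, r ≤ d := by
  obtain ⟨g, hg1, hg2⟩ := riesz_extension (cone A B x d) (fpm n) (by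
      rintro ⟨_, t, rfl⟩ h
      exact cone_nonneg A B hA hB x d hd t h) (by
      rintro ⟨N, t⟩
      obtain ⟨c, hc⟩ := exists_dom N
      obtain ⟨y, hy, e⟩ := exists_one (n := n) c
      refine ⟨⟨(0, ev y - t - qf x (N + LL y)), ⟨_, rfl⟩⟩, 0, y, le_rfl, hy, ?_, ?_⟩
      · intro v; simpa [e] using hc v
      · simp; linarith)
  have hg0 : ∀ t : ℝ, g (0, t) = t := fun t => hg1 ⟨(0, t), ⟨t, rfl⟩⟩
  let φ : MP n →ₗ[ℝ] ℝ := g.comp (LinearMap.inl ℝ (MP n) ℝ)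
  have key : ∀ (N : MP n) (τ : ℝ) (y : MN n × MN n × MP n), 0 ≤ τ → zok y.2.2 →
      (∀ v, 0 ≤ qf v (N + τ • kron A B + LL y)) →
      qf x (N + τ • kron A B + LL y) - τ * d - ev y ≤ φ N := by
    intro N τ y h1 h2 h3
    have := hg2 (N, τ * d + ev y - qf x (N + τ • kron A B + LL y)) ⟨τ, y, h1, h2, h3, by simp⟩
    have e : ((N, τ * d + ev y - qf x (N + τ • kron A B + LL y)) : MP n × ℝ) =
      (N, 0) + (0, τ * d + ev y - qf x (N + τ • kron A B + LL y)) := by simp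
    rw [e, map_add, hg0] at this
    have e2 : φ N = g (N, 0) := rfl
    rw [e2]; linarith
  let Y : MP n := Matrix.of fun p q => φ (Matrix.single p q 1)
  have hφ : ∀ N : MP n, φ N = ∑ p, ∑ q, N p q * Y p q := by
    intro N
    conv_lhs => rw [Matrix.matrix_eq_sum_single N]
    simp only [map_sum]
    refine Finset.sum_congr rfl fun p _ => Finset.sum_congr rfl fun q _ => ?_
    have : Matrix.single p q (N p q) = N p q • Matrix.single p q (1 : ℝ) := by
      rw [Matrix.smul_single, smul_eq_mul, mul_one]
    rw [this, map_smul]; rfl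
  have hQ : ∀ N : MP n, (∀ v, 0 ≤ qf v N) → qf x N ≤ φ N := by
    intro N hN
    simpa using key N 0 0 le_rfl zok_zero (by simpa using hN)
  have hL : ∀ y : MN n × MN n × MP n, zok y.2.2 → φ (LL y) ≤ ev y := by
    intro y hy
    have := key (-LL y) 0 y le_rfl hy (by simp)
    simp only [zero_smul, add_zero, neg_add_cancel, map_zero, zero_mul, map_neg] at this
    linarith
  have hZ : ∀ Z : MP n, zok Z → 0 ≤ φ Z := by
    intro Z hz
    have := hL (0, 0, Z) hz
    have e1 : LL ((0 : MN n), (0 : MN n), Z) = -Z := by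
      ext p q; simp [LL_apply, kron]
    have e2 : ev ((0 : MN n), (0 : MN n), Z) = 0 := by simp [ev_apply]
    rw [e1, e2, map_neg] at this
    linarith
  have hfree : ∀ p q : Fin n × Fin n, (∀ i j k l, ((i ≠ j ∧ k ≠ l) ∨ (i = j ∧ k = l)) →
      Matrix.single p q (1 : ℝ) (i, k) (j, l) = 0) → Y p q = 0 := by
    intro p q h
    have h1 := hZ (Matrix.single p q 1) (fun i j k l hh => (h i j k l hh).ge)
    have h2 := hZ (-Matrix.single p q 1) (fun i j k l hh => by
      rw [Matrix.neg_apply, h i j k l hh, neg_zero])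
    rw [map_neg] at h2
    exact le_antisymm (neg_nonneg.1 h2) h1
  have hLeq : ∀ G H : MN n, φ (LL (G, H, 0)) = ev (G, H, (0 : MP n)) := by
    intro G H
    apply le_antisymm (hL _ zok_zero)
    have := hL (-(G, H, 0)) (by simpa using zok_zero)
    rw [map_neg, map_neg, map_neg] at this
    linarith
  have hsymm : ∀ p q, Y q p = Y p q := by
    have hh : ∀ p q, Y q p ≤ Y p q := by
      intro p q
      have hz : ∀ v, qf v (Matrix.single p q (1 : ℝ) - Matrix.single q p 1) = 0 := by
        intro v
        rw [map_sub, ← Matrix.transpose_single, qf_transpose, sub_self]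
      have := hQ (Matrix.single p q (1 : ℝ) - Matrix.single q p 1) (fun v => (hz v).ge)
      rw [hz, map_sub] at this
      exact sub_nonneg.1 this
    exact fun p q => le_antisymm (hh p q) (hh q p)
  have hφAB : φ (kron A B) ≤ d := by
    have := key (-kron A B) 1 0 zero_le_one zok_zero (by simp)
    simp only [one_smul, neg_add_cancel, map_zero, add_zero, map_neg] at this
    linarith
  refine ⟨φ (kron A B), ⟨Y, ?_, ?_, ?_, ?_, ?_, ?_, (hφ _).symm⟩, hφAB⟩
  · rw [psd_iff]
    constructor
    · ext p q
      simp only [Matrix.transpose_apply, Matrix.sub_apply, vecMulVec_apply, hsymm p q, mul_comm]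
    · intro v
      have h1 : ∀ u : Fin n × Fin n → ℝ, qf u (vecMulVec v v) = (∑ p, u p * v p) ^ 2 := by
        intro u
        rw [qf_apply, sq, Finset.sum_mul_sum]
        refine Finset.sum_congr rfl fun p _ => Finset.sum_congr rfl fun q _ => ?_
        rw [vecMulVec_apply]; ring
      have h2 := hQ (vecMulVec v v) (fun u => by rw [h1]; positivity)
      have h3 : qf v (vecMulVec x x) = qf x (vecMulVec v v) := by
        simp only [qf_apply, vecMulVec_apply]
        refine Finset.sum_congr rfl fun p _ => Finset.sum_congr rfl fun q _ => by ring
      have h4 : qf v Y = φ (vecMulVec v v) := by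
        rw [hφ, qf_apply]
        refine Finset.sum_congr rfl fun p _ => Finset.sum_congr rfl fun q _ => ?_
        rw [vecMulVec_apply]; ring
      rw [map_sub, h3, h4]; linarith
  · intro k l
    have := hLeq 0 (Matrix.single k l 1)
    rw [hφ] at this
    simpa [LL_apply, ev_apply, kron, Eall, Fintype.sum_prod_type, Matrix.single_apply, ite_and,
      Finset.sum_ite_eq] using this
  · intro k l
    have := hLeq (Matrix.single k l 1) 0
    have e : LL (Matrix.single k l 1, 0, 0) = kron (Matrix.single k l 1) (Eall n) := by
      ext p q; simp [LL_apply, kron]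
    have e2 : ev (Matrix.single k l (1 : ℝ), 0, (0 : MP n)) = 1 := by
      simp [ev_apply, Eall, Matrix.single_apply, ite_and]
    rw [hφ, e, e2, sum_kron_left] at this
    simpa [Matrix.single_apply, ite_and] using this
  · intro k i j hij
    apply hfree
    rintro a b c e (⟨h1, h2⟩ | ⟨h1, h2⟩) <;> rw [Matrix.single_apply, if_neg]
    · rintro ⟨h3, h4⟩
      simp only [Prod.mk.injEq] at h3 h4
      exact h2 (h3.2.symm.trans h4.2)
    · rintro ⟨h3, h4⟩
      simp only [Prod.mk.injEq] at h3 h4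
      exact hij (h3.1.trans (h1.trans h4.1.symm))
  · intro k i j hij
    apply hfree
    rintro a b c e (⟨h1, h2⟩ | ⟨h1, h2⟩) <;> rw [Matrix.single_apply, if_neg]
    · rintro ⟨h3, h4⟩
      simp only [Prod.mk.injEq] at h3 h4
      exact h1 (h3.1.symm.trans h4.1)
    · rintro ⟨h3, h4⟩
      simp only [Prod.mk.injEq] at h3 h4
      exact hij (h3.2.trans (h2.trans h4.2.symm))
  · intro p q
    exact hZ _ (fun i j k l _ => by rw [Matrix.single_apply]; split_ifs <;> norm_num)

end Stmt5Aux

/-- Proposition 1 (strong duality for the inner SDP, as extended reals). -/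
theorem stmt5 {n : ℕ} (A B : Matrix (Fin n) (Fin n) ℝ)
    (hA : A.IsSymm) (hB : B.IsSymm) (x : Fin n × Fin n → ℝ) :
    sInf ((fun r : ℝ => (r : EReal)) '' PrimalVals A B x) =
      sSup ((fun r : ℝ => (r : EReal)) '' DualVals A B x) := by
  
  apply le_antisymm
  · obtain ⟨y, hy, hq⟩ := Stmt5Aux.exists_dual A B
    have hmem := Stmt5Aux.dual_mem A B hA hB x y hy hq
    set S := sSup ((fun r : ℝ => (r : EReal)) '' DualVals A B x) with hS
    have hub : ∀ r ∈ DualVals A B x, (r : EReal) ≤ S := fun r hr => le_sSup ⟨r, hr, rfl⟩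
    clear_value S
    induction S with
    | bot => exact absurd (le_bot_iff.1 (hub _ hmem)) (EReal.coe_ne_bot _)
    | top => exact le_top
    | coe d =>
      obtain ⟨r, hr, hrd⟩ := Stmt5Aux.strong A B hA hB x d
        (fun r hr => EReal.coe_le_coe_iff.1 (hub r hr))
      have hle : sInf ((fun r : ℝ => (r : EReal)) '' PrimalVals A B x) ≤ (r : EReal) :=
        sInf_le ⟨r, hr, rfl⟩
      exact hle.trans (EReal.coe_le_coe_iff.2 hrd)
  · apply sSup_le
    rintro _ ⟨s, hs, rfl⟩
    apply le_sInf
    rintro _ ⟨r, hr, rfl⟩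
    exact EReal.coe_le_coe_iff.2 (Stmt5Aux.weak A B x hr hs)
end
end

section
/- Let A, B be symmetric n×n real matrices. Suppose the identity permutation is optimal for the QAP, i.e., Σ_{i,j} A_{ij}B_{σ(i)σ(j)} ≥ Σ_{i,j} A_{ij}B_{ij} for all permutations σ of [n]. Suppose there exists 𝐙 ∈ ℝ^{n²×n²} such that: (i) 𝐙_{(i,k),(j,l)} ≥ 0 whenever (i ≠ j and k ≠ l) or (i = j and k = l); (ii) 𝐙_{(i,i),(j,j)} = 0 for all i,j; (iii) A⊗B − 𝐙 ∈ 𝒮; and (iv) A⊗B − 𝐙 ∈ 𝒯. Then (I, vec(I)vec(I)ᵀ) is an optimal solution to the SDP relaxation, and the optimal value of the SDP relaxation equals the QAP value Σ_{i,j} A_{ij}B_{ij}. -/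
open Matrix BigOperators

noncomputable section

theorem ip_psd_nonneg {ι : Type*} [Fintype ι] [DecidableEq ι] {M D : Matrix ι ι ℝ}
    (hM : M.PosSemidef) (hD : D.PosSemidef) : 0 ≤ ∑ p, ∑ q, M p q * D p q := by
  have h := (hM.hadamard hD).dotProduct_mulVec_nonneg (fun _ => (1 : ℝ))
  simpa [dotProduct, mulVec, Matrix.hadamard] using h

theorem sum_one_of_ds_left {n : ℕ} {X : Matrix (Fin n) (Fin n) ℝ} (hX : DS X)
    (i j : Fin n) : ∑ k, ∑ l, X i k * X j l = 1 := by
  rw [← Finset.sum_mul_sum, hX.1, hX.1, one_mul]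

theorem sum_one_of_ds_right {n : ℕ} {X : Matrix (Fin n) (Fin n) ℝ} (hX : DS X)
    (k l : Fin n) : ∑ i, ∑ j, X i k * X j l = 1 := by
  rw [← Finset.sum_mul_sum, hX.2.1, hX.2.1, one_mul]

theorem ds_one {n : ℕ} : DS (1 : Matrix (Fin n) (Fin n) ℝ) := by
  refine ⟨fun i => ?_, fun j => ?_, fun i j => ?_⟩
  · simp [Matrix.one_apply]
  · simp [Matrix.one_apply]
  · rw [Matrix.one_apply]; split_ifs <;> norm_num

theorem ip_scone_nonneg {n : ℕ} {M D : Matrix (Fin n × Fin n) (Fin n × Fin n) ℝ}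
    (hM : M ∈ Scone n) (hD : D.PosSemidef)
    (h1 : ∀ k l, ∑ i, ∑ j, D (i, k) (j, l) = 0)
    (h2 : ∀ k l, ∑ i, ∑ j, D (k, i) (l, j) = 0) :
    0 ≤ ∑ p, ∑ q, M p q * D p q := by
  have hcl : IsClosed {M : Matrix (Fin n × Fin n) (Fin n × Fin n) ℝ |
      0 ≤ ∑ p, ∑ q, M p q * D p q} := by
    apply isClosed_le continuous_const
    refine continuous_finsetSum _ fun p _ => continuous_finsetSum _ fun q _ => ?_
    exact (continuous_id.matrix_elem p q).mul continuous_const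
  refine closure_minimal ?_ hcl hM
  rintro N ⟨G, H, hN⟩
  have h := ip_psd_nonneg hN hD
  have hG : ∑ p, ∑ q, kron G (Eall n) p q * D p q = 0 := by
    simp only [kron, Eall, Matrix.of_apply, mul_one, Fintype.sum_prod_type]
    calc _ = ∑ i, ∑ j, G i j * ∑ k, ∑ l, D (i, k) (j, l) := by
          refine Finset.sum_congr rfl fun i _ => ?_
          rw [Finset.sum_comm]
          simp only [Finset.mul_sum]
      _ = 0 := by simp [h2]
  have hH : ∑ p, ∑ q, kron (Eall n) H p q * D p q = 0 := by
    simp only [kron, Eall, Matrix.of_apply, one_mul, Fintype.sum_prod_type]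
    rw [Finset.sum_comm]
    calc _ = ∑ k, ∑ l, H k l * ∑ i, ∑ j, D (i, k) (j, l) := by
          refine Finset.sum_congr rfl fun k _ => ?_
          simp only [Finset.mul_sum]
          symm
          rw [Finset.sum_comm]
          refine Finset.sum_congr rfl fun i _ => ?_
          rw [Finset.sum_comm]
      _ = 0 := by simp [h1]
  simp only [Matrix.add_apply, add_mul, Finset.sum_add_distrib, hG, hH, zero_add] at h
  exact h

theorem one_quad {n : ℕ} (M : Matrix (Fin n × Fin n) (Fin n × Fin n) ℝ) :
    ∑ p, ∑ q, vecM (1 : Matrix (Fin n) (Fin n) ℝ) p * M p q *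
      vecM (1 : Matrix (Fin n) (Fin n) ℝ) q = ∑ i, ∑ j, M (i, i) (j, j) := by
  simp [Fintype.sum_prod_type, vecM, Matrix.one_apply]

/-- Proposition 2 (exactness via `𝒮` and `𝒯`): if the identity permutation is optimal
for the QAP and `A⊗B − Z ∈ 𝒮 ∩ 𝒯` for a suitable `Z`, then `(I, vec(I)vec(I)ᵀ)` is
optimal for the SDP relaxation and the optimal values agree. -/
theorem stmt7 {n : ℕ} (A B : Matrix (Fin n) (Fin n) ℝ)
    (hA : A.IsSymm) (hB : B.IsSymm)
    (hQAP : ∀ σ : Equiv.Perm (Fin n),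
      ∑ i, ∑ j, A i j * B (σ i) (σ j) ≥ ∑ i, ∑ j, A i j * B i j)
    (Z : Matrix (Fin n × Fin n) (Fin n × Fin n) ℝ)
    (hZ1 : ∀ i j k l, ((i ≠ j ∧ k ≠ l) ∨ (i = j ∧ k = l)) → 0 ≤ Z (i, k) (j, l))
    (hZ2 : ∀ i j, Z (i, i) (j, j) = 0)
    (hZ3 : kron A B - Z ∈ Scone n)
    (hZ4 : kron A B - Z ∈ Tcone n) :
    SDPFeasible (1 : Matrix (Fin n) (Fin n) ℝ)
      (vecMulVec (vecM (1 : Matrix (Fin n) (Fin n) ℝ))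
        (vecM (1 : Matrix (Fin n) (Fin n) ℝ))) ∧
    (∀ (X : Matrix (Fin n) (Fin n) ℝ)
        (Y : Matrix (Fin n × Fin n) (Fin n × Fin n) ℝ),
      SDPFeasible X Y → sdpObj A B Y ≥ ∑ i, ∑ j, A i j * B i j) ∧
    sdpObj A B (vecMulVec (vecM (1 : Matrix (Fin n) (Fin n) ℝ))
        (vecM (1 : Matrix (Fin n) (Fin n) ℝ))) = ∑ i, ∑ j, A i j * B i j := by
  refine ⟨⟨?_, ?_, ?_, ?_, ?_, ?_, ds_one⟩, ?_, ?_⟩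
  · rw [sub_self]; exact Matrix.PosSemidef.zero
  · exact fun k l => sum_one_of_ds_right ds_one k l
  · exact fun k l => sum_one_of_ds_left ds_one k l
  · intro k i j hij
    simp only [vecMulVec_apply, vecM, Matrix.one_apply]
    by_cases h : i = k
    · subst h; simp [Ne.symm hij]
    · simp [h]
  · intro k i j hij
    simp only [vecMulVec_apply, vecM, Matrix.one_apply]
    by_cases h : k = i
    · subst h; simp [hij]
    · simp [h]
  · exact fun p q => mul_nonneg (ds_one.2.2 _ _) (ds_one.2.2 _ _)
  · rintro X Y ⟨hpsd, h1, h2, h3, h4, h5, hX⟩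
    have hS := ip_scone_nonneg hZ3 hpsd
      (by
        intro k l
        simp only [Matrix.sub_apply, Finset.sum_sub_distrib, h1, vecMulVec_apply, vecM,
          sum_one_of_ds_right hX, sub_self])
      (by
        intro k l
        simp only [Matrix.sub_apply, Finset.sum_sub_distrib, h2, vecMulVec_apply, vecM,
          sum_one_of_ds_left hX, sub_self])
    have hT := hZ4 X hX
    rw [one_quad] at hT
    simp only [Matrix.sub_apply, hZ2, sub_zero] at hT
    have hZY : 0 ≤ ∑ p, ∑ q, Z p q * Y p q := by
      refine Finset.sum_nonneg fun p _ => Finset.sum_nonneg fun q _ => ?_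
      obtain ⟨i, k⟩ := p
      obtain ⟨j, l⟩ := q
      by_cases hij : i = j
      · by_cases hkl : k = l
        · exact mul_nonneg (hZ1 _ _ _ _ (Or.inr ⟨hij, hkl⟩)) (h5 _ _)
        · subst hij; rw [h4 i k l hkl, mul_zero]
      · by_cases hkl : k = l
        · subst hkl; rw [h3 k i j hij, mul_zero]
        · exact mul_nonneg (hZ1 _ _ _ _ (Or.inl ⟨hij, hkl⟩)) (h5 _ _)
    have key : sdpObj A B Y = ∑ p, ∑ q, Z p q * Y p q
        + ∑ p, ∑ q, (kron A B - Z) p q * (Y - vecMulVec (vecM X) (vecM X)) p q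
        + ∑ p, ∑ q, vecM X p * (kron A B p q - Z p q) * vecM X q := by
      simp only [sdpObj, ← Finset.sum_add_distrib]
      refine Finset.sum_congr rfl fun p _ => Finset.sum_congr rfl fun q _ => ?_
      simp only [Matrix.sub_apply, vecMulVec_apply]
      ring
    have hT' : ∑ p, ∑ q, vecM X p * (kron A B p q - Z p q) * vecM X q ≥
        ∑ i, ∑ j, A i j * B i j := hT
    rw [key]
    linarith
  · have h := one_quad (kron A B)
    calc _ = ∑ p, ∑ q, vecM (1 : Matrix (Fin n) (Fin n) ℝ) p * kron A B p q *
          vecM (1 : Matrix (Fin n) (Fin n) ℝ) q := by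
          simp only [sdpObj]
          refine Finset.sum_congr rfl fun p _ => Finset.sum_congr rfl fun q _ => ?_
          rw [vecMulVec_apply]; ring
      _ = _ := h
end
end

section
/- Let A, B be symmetric n×n real matrices and let {u^{(ij)}}, {v^{(kl)}} ⊂ ℝⁿ satisfy: (1) u^{(ij)}_k + u^{(ij)}_l + v^{(kl)}_i + v^{(kl)}_j ≤ A_{ij}B_{kl} whenever (i ≠ j and k ≠ l) or (i = j and k = l); and (2) u^{(ij)}_i + u^{(ij)}_j + v^{(ij)}_i + v^{(ij)}_j = A_{ij}B_{ij} for all i,j. Suppose in addition there exist p, q ∈ ℝⁿ and an entrywise nonnegative matrix W ∈ ℝ^{n×n} with zero diagonal such that −Σ_{i,j} [ u^{(ij)}(e_i + e_j)ᵀ + (e_i + e_j)v^{(ij)ᵀ} ] = −W + 𝟏pᵀ + q𝟏ᵀ. Then the SDP relaxation is exact: (I, vec(I)vec(I)ᵀ) is feasible, every feasible pair (X, 𝐗) satisfies ⟨A⊗B, 𝐗⟩ ≥ Σ_{i,j} A_{ij}B_{ij}, and this value equals the QAP value. -/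
open Matrix BigOperators

noncomputable section

/-- Zero quadratic form of the Schur complement. -/
lemma feas_kernel {n : ℕ} {X : Matrix (Fin n) (Fin n) ℝ}
    {Y : Matrix (Fin n × Fin n) (Fin n × Fin n) ℝ}
    (hM : (Y - vecMulVec (vecM X) (vecM X)).PosSemidef)
    (z : Fin n × Fin n → ℝ) (hz : z ⬝ᵥ (Y *ᵥ z) = 1) (hx : vecM X ⬝ᵥ z = 1)
    (r : Fin n × Fin n) : ∑ s, Y r s * z s = vecM X r := by
  have h := (hM.dotProduct_mulVec_zero_iff z).1 (by
    rw [sub_mulVec, dotProduct_sub, vecMulVec_mulVec, hx]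
    simp only [star_trivial]
    rw [hz]
    simp [dotProduct_comm z, hx])
  have h' := congrFun h r
  rw [sub_mulVec, vecMulVec_mulVec, hx] at h'
  simp only [Pi.sub_apply, Pi.zero_apply, mulVec, dotProduct] at h'
  simp at h'
  linarith

lemma feas_row {n : ℕ} {X : Matrix (Fin n) (Fin n) ℝ}
    {Y : Matrix (Fin n × Fin n) (Fin n × Fin n) ℝ} (h : SDPFeasible X Y) (i k j : Fin n) :
    ∑ l, Y (i, k) (j, l) = X i k := by
  obtain ⟨hM, -, hs, -, -, -, hr, -, -⟩ := h
  have := feas_kernel hM (fun s => if s.1 = j then 1 else 0) (by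
      have := hs j j
      simp only [dotProduct, mulVec, Fintype.sum_prod_type_right]
      simpa using this) (by
      simp only [dotProduct, Fintype.sum_prod_type_right, vecM]
      simpa using hr j) (i, k)
  simpa [Fintype.sum_prod_type_right, vecM] using this

lemma feas_col {n : ℕ} {X : Matrix (Fin n) (Fin n) ℝ}
    {Y : Matrix (Fin n × Fin n) (Fin n × Fin n) ℝ} (h : SDPFeasible X Y) (i k l : Fin n) :
    ∑ j, Y (i, k) (j, l) = X i k := by
  obtain ⟨hM, hs, -, -, -, -, -, hr, -⟩ := h
  have := feas_kernel hM (fun s => if s.2 = l then 1 else 0) (by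
      have := hs l l
      simp only [dotProduct, mulVec, Fintype.sum_prod_type]
      simpa using this) (by
      simp only [dotProduct, Fintype.sum_prod_type, vecM]
      simpa using hr l) (i, k)
  simpa [Fintype.sum_prod_type, vecM] using this

lemma feas_symm {n : ℕ} {X : Matrix (Fin n) (Fin n) ℝ}
    {Y : Matrix (Fin n × Fin n) (Fin n × Fin n) ℝ} (h : SDPFeasible X Y)
    (r s : Fin n × Fin n) : Y r s = Y s r := by
  have := h.1.1.apply r s
  simp [vecMulVec_apply, mul_comm] at this
  linarith

/-- Permutation matrices are feasible. -/
lemma perm_feas {n : ℕ} (σ : Equiv.Perm (Fin n)) (X : Matrix (Fin n) (Fin n) ℝ)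
    (hX : ∀ i k, X i k = if σ i = k then 1 else 0) :
    SDPFeasible X (vecMulVec (vecM X) (vecM X)) := by
  have hr : ∀ i, ∑ j, X i j = 1 := fun i => by simp [hX]
  have hc : ∀ j, ∑ i, X i j = 1 := fun j => by
    simp [hX, ← Equiv.eq_symm_apply]
  refine ⟨by rw [sub_self]; exact PosSemidef.zero, ?_, ?_, ?_, ?_, ?_, hr, hc, ?_⟩
  · intro k l
    simp [vecMulVec_apply, vecM, ← Finset.mul_sum, hc]
  · intro k l
    simp [vecMulVec_apply, vecM, ← Finset.mul_sum, hr]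
  · intro k i j hij
    simp only [vecMulVec_apply, vecM, hX]
    by_cases h : σ i = k
    · have : σ j ≠ k := fun h' => hij (σ.injective (h.trans h'.symm))
      simp [this]
    · simp [h]
  · intro k i j hij
    simp only [vecMulVec_apply, vecM, hX]
    by_cases h : σ k = i
    · have : σ k ≠ j := fun h' => hij (h.symm.trans h')
      simp [this]
    · simp [h]
  · intro r s
    simp only [vecMulVec_apply, vecM, hX]
    split_ifs <;> simp
  · intro i j
    rw [hX]
    split_ifs <;> simp

lemma perm_obj {n : ℕ} (A B : Matrix (Fin n) (Fin n) ℝ) (σ : Equiv.Perm (Fin n))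
    (X : Matrix (Fin n) (Fin n) ℝ) (hX : ∀ i k, X i k = if σ i = k then 1 else 0) :
    sdpObj A B (vecMulVec (vecM X) (vecM X)) = ∑ i, ∑ j, A i j * B (σ i) (σ j) := by
  simp only [sdpObj, kron, vecMulVec_apply, vecM, hX, Fintype.sum_prod_type, of_apply]
  refine Finset.sum_congr rfl fun i _ => ?_
  rw [Finset.sum_eq_single (σ i)]
  · refine Finset.sum_congr rfl fun j _ => ?_
    rw [Finset.sum_eq_single (σ j)]
    · simp
    · intro b _ hb
      simp [hb.symm]
    · simp
  · intro b _ hb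
    simp [hb.symm]
  · simp

lemma certificate_sum {n : ℕ} (u v : Fin n → Fin n → (Fin n → ℝ))
    {X : Matrix (Fin n) (Fin n) ℝ}
    {Y : Matrix (Fin n × Fin n) (Fin n × Fin n) ℝ} (h : SDPFeasible X Y) :
    ∑ r : Fin n × Fin n, ∑ s : Fin n × Fin n,
      (u r.1 s.1 r.2 + u r.1 s.1 s.2 + v r.2 s.2 r.1 + v r.2 s.2 s.1) * Y r s =
    ∑ b, ∑ a, X b a *
      (∑ j, u b j a + ∑ i, u i b a + ∑ j, v a j b + ∑ i, v i a b) := by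
  simp only [add_mul, mul_add, Finset.sum_add_distrib]
  congr 1
  · congr 1
    · congr 1
      · simp only [Fintype.sum_prod_type, ← Finset.mul_sum, feas_row h, ← Finset.sum_mul]
        simp only [mul_comm]
      · rw [Finset.sum_comm]
        simp only [Fintype.sum_prod_type]
        refine Finset.sum_congr rfl fun b _ => Finset.sum_congr rfl fun a _ => ?_
        rw [Finset.mul_sum]
        refine Finset.sum_congr rfl fun i _ => ?_
        rw [← Finset.mul_sum, mul_comm]
        congr 1
        rw [← feas_row h b a i]
        exact Finset.sum_congr rfl fun k _ => feas_symm h _ _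
    · simp only [Fintype.sum_prod_type]
      refine Finset.sum_congr rfl fun b _ => Finset.sum_congr rfl fun a _ => ?_
      rw [Finset.mul_sum, Finset.sum_comm]
      refine Finset.sum_congr rfl fun i _ => ?_
      rw [← Finset.mul_sum, mul_comm, feas_col h]
  · rw [Finset.sum_comm]
    simp only [Fintype.sum_prod_type]
    refine Finset.sum_congr rfl fun b _ => Finset.sum_congr rfl fun a _ => ?_
    rw [Finset.mul_sum, Finset.sum_comm]
    refine Finset.sum_congr rfl fun i _ => ?_
    rw [← Finset.mul_sum, mul_comm]
    congr 1
    rw [← feas_col h b a i]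
    exact Finset.sum_congr rfl fun k _ => feas_symm h _ _

/-- Proposition 6 (certificate via the normal cone condition): under Requirements 1–2 of
the master theorem together with the normal-cone representation of the gradient term,
the SDP relaxation is exact. -/
theorem stmt14 {n : ℕ} (A B : Matrix (Fin n) (Fin n) ℝ)
    (hA : A.IsSymm) (hB : B.IsSymm)
    (u v : Fin n → Fin n → (Fin n → ℝ))
    (h1 : ∀ i j k l, ((i ≠ j ∧ k ≠ l) ∨ (i = j ∧ k = l)) →
      u i j k + u i j l + v k l i + v k l j ≤ A i j * B k l)
    (h2 : ∀ i j, u i j i + u i j j + v i j i + v i j j = A i j * B i j)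
    (p q : Fin n → ℝ) (W : Matrix (Fin n) (Fin n) ℝ)
    (hW0 : ∀ i j, 0 ≤ W i j) (hWdiag : ∀ i, W i i = 0)
    (heq : -(∑ i, ∑ j,
        (vecMulVec (u i j)
            ((fun a => if a = i then (1 : ℝ) else 0) +
              (fun a => if a = j then (1 : ℝ) else 0)) +
          vecMulVec
            ((fun a => if a = i then (1 : ℝ) else 0) +
              (fun a => if a = j then (1 : ℝ) else 0)) (v i j))) =
      -W + vecMulVec (fun _ => (1 : ℝ)) p + vecMulVec q (fun _ => (1 : ℝ))) :
    SDPFeasible (1 : Matrix (Fin n) (Fin n) ℝ)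
      (vecMulVec (vecM (1 : Matrix (Fin n) (Fin n) ℝ))
        (vecM (1 : Matrix (Fin n) (Fin n) ℝ))) ∧
    (∀ (X : Matrix (Fin n) (Fin n) ℝ)
        (Y : Matrix (Fin n × Fin n) (Fin n × Fin n) ℝ),
      SDPFeasible X Y → sdpObj A B Y ≥ ∑ i, ∑ j, A i j * B i j) ∧
    sdpObj A B (vecMulVec (vecM (1 : Matrix (Fin n) (Fin n) ℝ))
        (vecM (1 : Matrix (Fin n) (Fin n) ℝ))) = ∑ i, ∑ j, A i j * B i j ∧
    (∀ σ : Equiv.Perm (Fin n),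
      ∑ i, ∑ j, A i j * B (σ i) (σ j) ≥ ∑ i, ∑ j, A i j * B i j) := by
  have hG : ∀ a b, ∑ j, u b j a + ∑ i, u i b a + ∑ j, v a j b + ∑ i, v i a b
      = W a b - p b - q a := by
    intro a b
    have h := congrFun (congrFun heq a) b
    simp only [Matrix.neg_apply, Matrix.add_apply, Matrix.sum_apply, vecMulVec_apply,
      Pi.add_apply, mul_add, add_mul, Finset.sum_add_distrib, mul_ite, ite_mul, mul_one,
      mul_zero, one_mul, zero_mul, Finset.sum_ite_irrel, Finset.sum_const_zero,
      Finset.sum_ite_eq, Finset.mem_univ, if_true] at h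
    linarith
  have hval : ∀ X : Matrix (Fin n) (Fin n) ℝ, DS X →
      ∑ b, ∑ a, X b a * (∑ j, u b j a + ∑ i, u i b a + ∑ j, v a j b + ∑ i, v i a b)
      = ∑ b, ∑ a, X b a * W a b - ∑ b, p b - ∑ a, q a := by
    intro X hX
    simp only [hG, mul_sub, Finset.sum_sub_distrib]
    congr 1
    · congr 1
      simp only [← Finset.sum_mul, hX.1, one_mul]
    · rw [Finset.sum_comm]
      simp only [← Finset.sum_mul, hX.2.1, one_mul]
  have hone : ∀ i k, (1 : Matrix (Fin n) (Fin n) ℝ) i k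
      = if (Equiv.refl (Fin n)) i = k then 1 else 0 := fun i k => by
    rw [Matrix.one_apply, Equiv.refl_apply]
  have hfe := perm_feas (Equiv.refl (Fin n)) 1 hone
  have hob := perm_obj A B (Equiv.refl (Fin n)) 1 hone
  simp only [Equiv.refl_apply] at hob
  have hid : ∑ i, ∑ j, A i j * B i j = - ∑ b, p b - ∑ a, q a := by
    have hd : ∑ b, (∑ j, u b j b + ∑ i, u i b b + ∑ j, v b j b + ∑ i, v i b b)
        = - ∑ b, p b - ∑ a, q a := by
      simp only [hG, hWdiag, Finset.sum_sub_distrib]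
      simp
    rw [← hd]
    simp only [← h2, Finset.sum_add_distrib]
    rw [Finset.sum_comm (f := fun i j => u i j j), Finset.sum_comm (f := fun i j => v i j j)]
  have hlow : ∀ (X : Matrix (Fin n) (Fin n) ℝ)
        (Y : Matrix (Fin n × Fin n) (Fin n × Fin n) ℝ),
      SDPFeasible X Y → sdpObj A B Y ≥ ∑ i, ∑ j, A i j * B i j := by
    intro X Y h
    have hc := certificate_sum u v h
    obtain ⟨-, -, -, hz1, hz2, hpos, hDS⟩ := id h
    rw [hval X hDS] at hc
    have hW : 0 ≤ ∑ b, ∑ a, X b a * W a b :=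
      Finset.sum_nonneg fun b _ => Finset.sum_nonneg fun a _ =>
        mul_nonneg (hDS.2.2 b a) (hW0 a b)
    have hle : ∑ r : Fin n × Fin n, ∑ s : Fin n × Fin n,
        (u r.1 s.1 r.2 + u r.1 s.1 s.2 + v r.2 s.2 r.1 + v r.2 s.2 s.1) * Y r s
        ≤ sdpObj A B Y := by
      refine Finset.sum_le_sum fun r _ => Finset.sum_le_sum fun s _ => ?_
      obtain ⟨i, k⟩ := r
      obtain ⟨j, l⟩ := s
      simp only [kron, of_apply]
      by_cases hij : i = j
      · by_cases hkl : k = l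
        · exact mul_le_mul_of_nonneg_right (h1 i j k l (Or.inr ⟨hij, hkl⟩)) (hpos _ _)
        · subst hij
          simp [hz2 i k l hkl]
      · by_cases hkl : k = l
        · subst hkl
          simp [hz1 k i j hij]
        · exact mul_le_mul_of_nonneg_right (h1 i j k l (Or.inl ⟨hij, hkl⟩)) (hpos _ _)
    linarith
  refine ⟨hfe, hlow, hob, fun σ => ?_⟩
  have hX : ∀ i k, (Matrix.of fun i k => if σ i = k then (1 : ℝ) else 0) i k
      = if σ i = k then 1 else 0 := fun i k => rfl
  rw [← perm_obj A B σ _ hX]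
  exact hlow _ _ (perm_feas σ _ hX)
end
end

section
/- Let M = −W + 𝟏pᵀ + q𝟏ᵀ ∈ ℝ^{n×n}, where W is an entrywise nonnegative matrix with zero diagonal and p, q ∈ ℝⁿ. Then M lies in the normal cone of the set of doubly stochastic matrices at the identity: ⟨M, Y − I⟩ ≤ 0 for every doubly stochastic matrix Y ∈ ℝ^{n×n}. -/
open Matrix BigOperators

noncomputable section

/-- Lemma 3: `M = −W + 𝟏pᵀ + q𝟏ᵀ` lies in the normal cone of the doubly stochastic
matrices at the identity. -/
theorem stmt15 {n : ℕ} (W : Matrix (Fin n) (Fin n) ℝ)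
    (hW0 : ∀ i j, 0 ≤ W i j) (hWdiag : ∀ i, W i i = 0)
    (p q : Fin n → ℝ) :
    ∀ Y : Matrix (Fin n) (Fin n) ℝ, DS Y →
      ∑ i, ∑ j,
        ((-W + vecMulVec (fun _ => (1 : ℝ)) p + vecMulVec q (fun _ => (1 : ℝ)) :
            Matrix (Fin n) (Fin n) ℝ)) i j *
          (Y - 1) i j ≤ 0 := by
  intro Y hY
  obtain ⟨hr, hc, hn⟩ := hY
  have e : ∀ i j,
      ((-W + vecMulVec (fun _ => (1 : ℝ)) p + vecMulVec q (fun _ => (1 : ℝ)) :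
            Matrix (Fin n) (Fin n) ℝ)) i j * (Y - 1) i j
        = -(W i j * Y i j) + p j * (Y - 1) i j + q i * (Y - 1) i j := by
    intro i j
    have hz : W i j * (1 : Matrix (Fin n) (Fin n) ℝ) i j = 0 := by
      by_cases h : i = j
      · subst h
        simp [hWdiag]
      · simp [Matrix.one_apply_ne h]
    simp only [Matrix.add_apply, Matrix.neg_apply, Matrix.sub_apply, vecMulVec_apply]
    linear_combination hz
  simp only [e, Finset.sum_add_distrib]
  have h1 : ∑ i, ∑ j, p j * (Y - 1) i j = 0 := by
    rw [Finset.sum_comm]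
    apply Finset.sum_eq_zero
    intro j _
    rw [← Finset.mul_sum]
    simp [Matrix.sub_apply, Finset.sum_sub_distrib, hc, Matrix.one_apply]
  have h2 : ∑ i, ∑ j, q i * (Y - 1) i j = 0 := by
    apply Finset.sum_eq_zero
    intro i _
    rw [← Finset.mul_sum]
    simp [Matrix.sub_apply, Finset.sum_sub_distrib, hr, Matrix.one_apply]
  rw [h1, h2, add_zero, add_zero]
  exact Finset.sum_nonpos fun i _ => Finset.sum_nonpos fun j _ =>
    neg_nonpos.mpr (mul_nonneg (hW0 i j) (hn i j))
end
end

section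
/- Let A, B be symmetric n×n real matrices and let (X, 𝐗) be any feasible pair of the SDP relaxation. Then the marginal-sum identities hold: Σ_i 𝐗_{(i,j),(k,l)} = X_{kl} and Σ_i 𝐗_{(j,i),(k,l)} = X_{kl} for all j, k, l ∈ [n]. -/
open Matrix BigOperators

noncomputable section

/-- Key step: a vector on which the quadratic form vanishes lies in the kernel. -/
lemma marginal_aux {n : ℕ} {ι : Type*} [Fintype ι] [DecidableEq ι] (Y : Matrix ι ι ℝ) (x : ι → ℝ)
    (h : (Y - vecMulVec x x).PosSemidef) (f : Fin n → ι)
    (h1 : ∑ i, ∑ j, Y (f i) (f j) = 1) (h2 : ∑ i, x (f i) = 1) (q : ι) :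
    ∑ i, Y (f i) q = x q := by
  have hmv : ∀ p, ((Y - vecMulVec x x) *ᵥ (∑ i, Pi.single (f i) (1 : ℝ))) p
      = ∑ i, Y p (f i) - x p := by
    intro p
    rw [Matrix.mulVec_sum]
    simp [Finset.sum_apply, vecMulVec_apply, Finset.sum_sub_distrib, ← Finset.mul_sum, h2]
  have h0 : star (∑ i, Pi.single (f i) (1 : ℝ)) ⬝ᵥ
      ((Y - vecMulVec x x) *ᵥ (∑ i, Pi.single (f i) (1 : ℝ))) = 0 := by
    rw [star_trivial, sum_dotProduct]
    simp only [single_dotProduct, hmv, one_mul, Finset.sum_sub_distrib, h1, h2, sub_self]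
  have hz := (h.dotProduct_mulVec_zero_iff _).1 h0
  have hq := hmv q
  rw [hz] at hq
  have hs : ∀ p, Y p q = Y q p := by
    intro p
    have := h.isHermitian.apply p q
    simp only [Matrix.sub_apply, vecMulVec_apply, star_trivial] at this
    linarith [mul_comm (x p) (x q)]
  simp only [hs]
  simp only [Pi.zero_apply] at hq
  linarith

/-- Proposition 8 (marginal-sum identities) for any feasible pair of the SDP
relaxation. -/
theorem stmt16 {n : ℕ} (A B : Matrix (Fin n) (Fin n) ℝ)
    (hA : A.IsSymm) (hB : B.IsSymm)
    (X : Matrix (Fin n) (Fin n) ℝ)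
    (Y : Matrix (Fin n × Fin n) (Fin n × Fin n) ℝ)
    (hfeas : SDPFeasible X Y) :
    ∀ j k l, (∑ i, Y (i, j) (k, l) = X k l) ∧ (∑ i, Y (j, i) (k, l) = X k l) := by
  obtain ⟨hp, hc, hr, -, -, -, d1, d2, -⟩ := hfeas
  intro j k l
  exact ⟨marginal_aux Y (vecM X) hp (fun i => (i, j)) (hc j j) (d2 j) (k, l),
    marginal_aux Y (vecM X) hp (fun i => (j, i)) (hr j j) (d1 j) (k, l)⟩
end
end

section
/- Let A, B be symmetric n×n real matrices and let (X, 𝐗) be any feasible pair of the SDP relaxation. Then the arrow condition is automatically satisfied: 𝐗_{(i,j),(i,j)} = X_{ij} for all i, j ∈ [n]. -/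
open Matrix BigOperators

noncomputable section

/-- The arrow condition is automatically satisfied by any feasible pair of the SDP
relaxation. -/
theorem stmt17 {n : ℕ} (A B : Matrix (Fin n) (Fin n) ℝ)
    (hA : A.IsSymm) (hB : B.IsSymm)
    (X : Matrix (Fin n) (Fin n) ℝ)
    (Y : Matrix (Fin n × Fin n) (Fin n × Fin n) ℝ)
    (hfeas : SDPFeasible X Y) :
    ∀ i j, Y (i, j) (i, j) = X i j := by
  obtain ⟨hP, -, h2, -, h4, -, hr, -, -⟩ := hfeas
  intro i j
  set M := Y - vecMulVec (vecM X) (vecM X) with hM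
  let u : Fin n × Fin n → ℝ := fun p => if p.1 = i then 1 else 0
  have hMu : ∀ p, (M *ᵥ u) p = ∑ l, Y p (i, l) - X p.1 p.2 := by
    intro p
    have e : (M *ᵥ u) p = ∑ l, (Y p (i, l) - X p.1 p.2 * X i l) := by
      simp only [mulVec, dotProduct, Fintype.sum_prod_type, u, hM, Matrix.sub_apply,
        vecMulVec_apply, vecM, mul_ite, mul_one, mul_zero]
      rw [Finset.sum_comm]
      simp
    rw [e, Finset.sum_sub_distrib, ← Finset.mul_sum, hr i, mul_one]
  have hq : star u ⬝ᵥ (M *ᵥ u) = 0 := by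
    have e : star u ⬝ᵥ (M *ᵥ u) = ∑ k, (∑ l, Y (i, k) (i, l) - X i k) := by
      simp only [dotProduct, Fintype.sum_prod_type, hMu, u, Pi.star_apply, star_trivial,
        ite_mul, one_mul, zero_mul]
      rw [Finset.sum_comm]
      simp
    rw [e, Finset.sum_sub_distrib, h2 i i, hr i, sub_self]
  have hz := congrFun ((hP.dotProduct_mulVec_zero_iff u).1 hq) (i, j)
  rw [hMu, Finset.sum_eq_single j (fun l _ hl => h4 i j l (Ne.symm hl)) (by simp)] at hz
  simpa [sub_eq_zero] using hz
end
end
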